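/- arXiv:2104.11310 — 2 statements merged into one kernel-verified Lean document; each statement's English description precedes it below -/
import Mathlib

section
/- (Quiver Radial Isotropy.) Let Q be a finite connected acyclic quiver, d a dimension vector of Q, V a real representation of Q of dimension vector d which is locally semi-simple, and σ ∈ ℤ^{Q₀} an integral weight. Then σ lies in the relative (intrinsic) interior of the orbit cone Ω(V) if and only if there exists A ∈ ∏_{x∈Q₀} GL(d(x),ℝ) that puts V in σ-critical position, i.e. such that the representation A·V is σ-critical. -/
open scoped BigOperators
open Matrix

namespace QuiverRI

variable {V A : Type}

/-- A real representation, of dimension vector `dv`, of the quiver with vertex set `V`,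
arrow set `A`, and each arrow `a : src a → tgt a`: a matrix in
`ℝ^{dv(tgt a) × dv(src a)}` for every arrow `a`. -/
def Rep (src tgt : A → V) (dv : V → ℕ) : Type :=
  ∀ a : A, Matrix (Fin (dv (tgt a))) (Fin (dv (src a))) ℝ

/-- A subrepresentation of `R`: a family of subspaces `space x ⊆ ℝ^{dv x}` invariant under
all the structure maps of `R`. -/
structure Subrep (src tgt : A → V) (dv : V → ℕ) (R : Rep src tgt dv) where
  space : ∀ x : V, Submodule ℝ (Fin (dv x) → ℝ)
  invariant : ∀ a : A, ∀ v ∈ space (src a), (R a).mulVec v ∈ space (tgt a)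

/-- The orbit cone `Ω(V)` of a representation: all real weights `σ` with `σ · dim R = 0`
and `σ · dim W ≤ 0` for every subrepresentation `W`. -/
def OrbitCone [Fintype V] (src tgt : A → V) (dv : V → ℕ) (R : Rep src tgt dv) :
    Set (V → ℝ) :=
  {σ | (∑ x, σ x * dv x) = 0 ∧
    ∀ W : Subrep src tgt dv R, (∑ x, σ x * Module.finrank ℝ (W.space x)) ≤ 0}

/-- A subrepresentation `W` of `R` is `σ`-stable (as a representation in its own right;
its subrepresentations are exactly the subrepresentations of `R` contained in `W`):
`σ · dim W = 0` and `σ · dim W' < 0` for every subrepresentation `W' ⊆ W` other than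
`0` and `W`. -/
def IsStableSub [Fintype V] (src tgt : A → V) (dv : V → ℕ) (R : Rep src tgt dv)
    (σ : V → ℤ) (W : Subrep src tgt dv R) : Prop :=
  (∑ x, σ x * (Module.finrank ℝ (W.space x) : ℤ)) = 0 ∧
  ∀ W' : Subrep src tgt dv R, (∀ x, W'.space x ≤ W.space x) →
    W'.space ≠ (fun x => (⊥ : Submodule ℝ (Fin (dv x) → ℝ))) → W'.space ≠ W.space →
    (∑ x, σ x * (Module.finrank ℝ (W'.space x) : ℤ)) < 0

/-- `R` is `σ`-polystable: it is the internal direct sum, at every vertex, of finitely many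
`σ`-stable subrepresentations. -/
def IsPolystable [Fintype V] (src tgt : A → V) (dv : V → ℕ) (R : Rep src tgt dv)
    (σ : V → ℤ) : Prop :=
  ∃ (k : ℕ) (W : Fin k → Subrep src tgt dv R),
    (∀ x : V, DirectSum.IsInternal (fun j : Fin k => (W j).space x)) ∧
    ∀ j, IsStableSub src tgt dv R σ (W j)

/-- `R` is locally semi-simple: `σ₀`-polystable for some integral weight `σ₀`. -/
def LocallySemisimple [Fintype V] (src tgt : A → V) (dv : V → ℕ)
    (R : Rep src tgt dv) : Prop :=
  ∃ σ₀ : V → ℤ, IsPolystable src tgt dv R σ₀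

/-- `R` is `σ`-critical:
`∑_{a : src a = x} (R a)ᵀ (R a) − ∑_{a : tgt a = x} (R a)(R a)ᵀ = σ(x) I` at each vertex. -/
def IsCritical [Fintype V] [Fintype A] [DecidableEq V] (src tgt : A → V) (dv : V → ℕ)
    (R : Rep src tgt dv) (σ : V → ℤ) : Prop :=
  ∀ x : V,
    ((∑ a : A, if h : src a = x then
        Matrix.reindex (finCongr (congrArg dv h)) (finCongr (congrArg dv h)) ((R a)ᵀ * R a)
      else 0) -
     (∑ a : A, if h : tgt a = x then
        Matrix.reindex (finCongr (congrArg dv h)) (finCongr (congrArg dv h)) (R a * (R a)ᵀ)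
      else 0))
    = (σ x : ℝ) • (1 : Matrix (Fin (dv x)) (Fin (dv x)) ℝ)

/-- The base-change action of `∏_x GL(dv x)` on representations:
`(A · R)(a) = A(tgt a) · R(a) · A(src a)⁻¹`. -/
noncomputable def act (src tgt : A → V) (dv : V → ℕ)
    (Amat : ∀ x : V, Matrix (Fin (dv x)) (Fin (dv x)) ℝ) (R : Rep src tgt dv) :
    Rep src tgt dv :=
  fun a => Amat (tgt a) * R a * (Amat (src a))⁻¹

/-- The quiver is connected (as an undirected graph). -/
def Connected (src tgt : A → V) : Prop :=
  ∀ x y : V, Relation.ReflTransGen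
    (fun u v => ∃ a : A, (src a = u ∧ tgt a = v) ∨ (src a = v ∧ tgt a = u)) x y

/-- The quiver is acyclic: it admits a strictly monotone grading of its vertices
(equivalently, it has no directed cycles). -/
def Acyclic (src tgt : A → V) : Prop :=
  ∃ r : V → ℕ, ∀ a : A, r (src a) < r (tgt a)

end QuiverRI

/-!
For a `σ`-critical representation, pairing the critical equation with the orthogonal projections
`P x` onto a subrepresentation `W` gives `σ · dim W = -∑ a, ‖P (tgt a) * U a - U a * P (src a)‖²`.
So `σ` lies in the orbit cone, and where `σ · dim W = 0` the projections commute with the structure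
maps, so that `W` has an invariant complement and every weight of the cone vanishes on `dim W`: this
puts `σ` in the relative interior. The orbit cone does not change along an orbit.

Conversely, the stable summands of a polystable representation remain stable for every weight in the
relative interior of the cone, so it suffices to make one stable representation critical, by
minimising the Kempf–Ness energy `∑ a, ‖(B · U) a‖² + ∑ x, σ x * log (det (B x))²` over `B`. By the
singular value decomposition this is a minimisation over a product of compact orthogonal groups and
a torus. On the torus the energy is convex, and stability, tested on the coordinate
subrepresentations `{l < c}` and integrated over `c`, makes it grow along every ray `l` except the
constant ones, along which it is invariant.
-/

namespace QuiverRI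

/-! ### Linear algebra -/

section LinearAlgebra

variable {ι κ : Type*} [Fintype ι] [Fintype κ]

lemma trace_transpose_mul_self_nonneg (D : Matrix ι κ ℝ) : 0 ≤ trace (Dᵀ * D) := by
  simpa using (posSemidef_conjTranspose_mul_self D).trace_nonneg

lemma trace_transpose_mul_self_eq_zero_iff {D : Matrix ι κ ℝ} :
    trace (Dᵀ * D) = 0 ↔ D = 0 := by
  simpa using trace_conjTranspose_mul_self_eq_zero_iff (A := D)

lemma exists_isSymm_isProj [DecidableEq ι] (W : Submodule ℝ (ι → ℝ)) :
    ∃ P : Matrix ι ι ℝ, P.IsSymm ∧ LinearMap.IsProj W (toLin' P) := by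
  let e := (WithLp.linearEquiv 2 ℝ (ι → ℝ))
  let W₂ := W.comap e.toLinearMap
  let P : Matrix ι ι ℝ := toEuclideanLin.symm W₂.starProjection.toLinearMap
  have hP (v : ι → ℝ) : toLin' P v = e (W₂.starProjection (e.symm v)) := by
    change e (toEuclideanLin P (e.symm v)) = _
    simp [P]
  refine ⟨P, ?_, fun v => ?_, fun v hv => ?_⟩
  · rw [← isHermitian_iff_isSymm, ← isSymmetric_toEuclideanLin_iff]
    simpa [P] using W₂.starProjection_isSymmetric
  · rw [hP]
    exact W₂.starProjection_apply_mem (e.symm v)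
  · have hv₂ : e.symm v ∈ W₂ := by simpa [W₂] using hv
    rw [hP, Submodule.starProjection_eq_self_iff.2 hv₂, e.apply_symm_apply]

lemma trace_isProj_defect {P : Matrix κ κ ℝ} {Q : Matrix ι ι ℝ} {U : Matrix ι κ ℝ}
    (hP : P.IsSymm) (hP₂ : IsIdempotentElem P) (hQ : Q.IsSymm) (hQ₂ : IsIdempotentElem Q)
    (hU : Q * (U * P) = U * P) :
    trace (P * (Uᵀ * U)) - trace (Q * (U * Uᵀ)) =
      -trace ((Q * U - U * P)ᵀ * (Q * U - U * P)) := by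
  have hUP : trace ((U * P)ᵀ * (U * P)) = trace (P * (Uᵀ * U)) := by
    rw [transpose_mul, hP.eq, Matrix.mul_assoc, trace_mul_comm, Matrix.mul_assoc, Matrix.mul_assoc,
      hP₂.eq, ← Matrix.mul_assoc, trace_mul_comm]
  have hQU : trace ((Q * U)ᵀ * (Q * U)) = trace (Q * (U * Uᵀ)) := by
    rw [transpose_mul, hQ.eq, Matrix.mul_assoc, ← Matrix.mul_assoc Q, hQ₂.eq, trace_mul_comm,
      Matrix.mul_assoc]
  have hmixed : trace ((Q * U)ᵀ * (U * P)) = trace (P * (Uᵀ * U)) := by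
    rw [transpose_mul, hQ.eq, Matrix.mul_assoc, hU, ← Matrix.mul_assoc, trace_mul_comm]
  have hmixed' : trace ((U * P)ᵀ * (Q * U)) = trace (P * (Uᵀ * U)) := by
    rw [← hmixed, ← trace_transpose, transpose_mul, transpose_transpose]
  simp only [transpose_sub, Matrix.sub_mul, Matrix.mul_sub, trace_sub]
  linarith

lemma exists_orthogonal_diagonal [DecidableEq ι] {X : Matrix ι ι ℝ} (hX : X.IsHermitian) :
    ∃ K : Matrix ι ι ℝ, Kᵀ * K = 1 ∧ X = K * diagonal hX.eigenvalues * Kᵀ := by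
  refine ⟨hX.eigenvectorUnitary, Unitary.coe_star_mul_self hX.eigenvectorUnitary, ?_⟩
  simpa [Unitary.conjStarAlgAut_apply, star_eq_conjTranspose] using hX.spectral_theorem

lemma exists_orthogonal_diagonal_exp [DecidableEq ι] {H : Matrix ι ι ℝ} (hH : H.PosDef) :
    ∃ (K : Matrix ι ι ℝ) (l : ι → ℝ), Kᵀ * K = 1 ∧
      H = K * diagonal (fun i => Real.exp (l i)) * Kᵀ := by
  obtain ⟨K, hK, hdiag⟩ := exists_orthogonal_diagonal hH.1
  refine ⟨K, fun i => Real.log (hH.1.eigenvalues i), hK, ?_⟩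
  simpa only [Real.exp_log (hH.eigenvalues_pos _)] using hdiag

lemma isCompact_orthogonal [DecidableEq ι] : IsCompact {K : Matrix ι ι ℝ | Kᵀ * K = 1} := by
  have hbox : IsCompact {K : Matrix ι ι ℝ | ∀ i j, K i j ∈ Set.Icc (-1 : ℝ) 1} := by
    have := isCompact_univ_pi fun _ : ι => isCompact_univ_pi fun _ : ι =>
      isCompact_Icc (a := (-1 : ℝ)) (b := 1)
    simp only [Set.pi, Set.mem_univ, true_imp_iff, Set.mem_ofPred_eq] at this
    exact this
  refine hbox.of_isClosed_subset (isClosed_eq (by fun_prop) continuous_const) fun K hK i j => ?_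
  have hcol : ∑ i, K i j ^ 2 = 1 := by
    simpa [mul_apply, sq] using congrFun (congrFun hK j) j
  rw [Set.mem_Icc, ← abs_le, ← sq_le_one_iff_abs_le_one, ← hcol]
  exact Finset.single_le_sum (f := fun i => K i j ^ 2) (fun _ _ => sq_nonneg _) (Finset.mem_univ i)

lemma det_sq_of_orthogonal [DecidableEq ι] {O : Matrix ι ι ℝ}
    (hO : Oᵀ * O = 1) : O.det ^ 2 = 1 := by
  simpa [sq] using congrArg det hO

lemma isUnit_det_transpose_of_orthogonal [DecidableEq ι] {K : Matrix ι ι ℝ} (hK : Kᵀ * K = 1) :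
    IsUnit Kᵀ.det :=
  isUnit_det_of_right_inverse hK

lemma isUnit_det_diagonal_exp_mul_transpose [DecidableEq ι] {K : Matrix ι ι ℝ} (hK : Kᵀ * K = 1)
    (l : ι → ℝ) :
    IsUnit ((diagonal fun i => Real.exp (l i / 2)) * Kᵀ).det := by
  rw [det_mul]
  exact .mul (by simp [Finset.prod_ne_zero_iff]) (isUnit_det_transpose_of_orthogonal hK)

lemma exists_orthogonal_mul_diagonal_exp_mul [DecidableEq ι] {B : Matrix ι ι ℝ}
    (hB : IsUnit B.det) :
    ∃ (O K : Matrix ι ι ℝ) (l : ι → ℝ), Oᵀ * O = 1 ∧ Kᵀ * K = 1 ∧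
      B = O * (diagonal (fun i => Real.exp (l i / 2)) * Kᵀ) := by
  have hpos : (Bᵀ * B).PosDef := by
    simpa using PosDef.conjTranspose_mul_self B
      (mulVec_injective_of_isUnit ((isUnit_iff_isUnit_det B).2 hB))
  obtain ⟨K, l, hK, hdiag⟩ := exists_orthogonal_diagonal_exp hpos
  have hK' : K * Kᵀ = 1 := mul_eq_one_comm.1 hK
  let D (s : ℝ) : Matrix ι ι ℝ := diagonal fun i => Real.exp (s * l i)
  have hD (s t : ℝ) : D s * D t = D (s + t) := by simp [D, ← Real.exp_add, add_mul]
  have hD₀ : D 0 = 1 := by simp [D]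
  refine ⟨B * K * D (-1 / 2), K, l, ?_, hK, ?_⟩
  · have hD₁ : Kᵀ * (Bᵀ * B) * K = D 1 := by
      rw [hdiag, ← Matrix.mul_assoc, ← Matrix.mul_assoc, hK, Matrix.one_mul, Matrix.mul_assoc, hK,
        Matrix.mul_one]
      simp [D]
    calc _ = D (-1 / 2) * (Kᵀ * (Bᵀ * B) * K) * D (-1 / 2) := by
          simp only [transpose_mul, D, diagonal_transpose, Matrix.mul_assoc]
      _ = 1 := by rw [hD₁, hD, hD, ← hD₀]; norm_num
  · have hhalf : diagonal (fun i => Real.exp (l i / 2)) = D (1 / 2) := by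
      simp only [D, one_div_mul_eq_div]
    rw [hhalf, Matrix.mul_assoc, ← Matrix.mul_assoc (D _), hD]
    norm_num [hD₀, Matrix.mul_assoc, hK']

lemma trace_mul_submatrix_blockDiagonal' [DecidableEq ι] {m : ι → Type*} [∀ j, Fintype (m j)]
    (e : (Σ j, m j) ≃ κ) (X : Matrix κ κ ℝ) (M : ∀ j, Matrix (m j) (m j) ℝ) :
    trace (X * (blockDiagonal' M).submatrix e.symm e.symm) =
      ∑ j, trace (blockDiag' (X.submatrix e e) j * M j) := by
  have hreindex : trace (X * (blockDiagonal' M).submatrix e.symm e.symm) =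
      trace (X.submatrix e e * blockDiagonal' M) := by
    simp only [trace, diag_apply, mul_apply, submatrix_apply, ← e.sum_comp, e.symm_apply_apply]
  rw [hreindex, trace, Fintype.sum_sigma]
  refine Finset.sum_congr rfl fun j _ => Finset.sum_congr rfl fun i _ => ?_
  simp only [diag_apply, mul_apply, Fintype.sum_sigma]
  rw [Finset.sum_eq_single j (fun j' _ hj' => by simp [blockDiagonal'_apply_ne _ _ _ hj'])
    (by simp)]
  simp [blockDiag'_apply]

end LinearAlgebra

/-! ### Convexity -/

section RelativeInterior

variable {E : Type*} [NormedAddCommGroup E] [NormedSpace ℝ E]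

lemma mem_intrinsicInterior_of_forall_eq_zero {F : Set (E →L[ℝ] ℝ)} (hF : F.Finite) {u : E}
    (hu : ∀ f ∈ F, f u ≤ 0)
    (hzero : ∀ f ∈ F, f u = 0 → ∀ v, (∀ g ∈ F, g v ≤ 0) → f v = 0) :
    u ∈ intrinsicInterior ℝ {v | ∀ f ∈ F, f v ≤ 0} := by
  set C : Set E := {v | ∀ f ∈ F, f v ≤ 0}
  have hspan : ∀ f ∈ F, f u = 0 → ∀ v ∈ affineSpan ℝ C, f v = 0 := fun f hf hfu =>
    have hle : affineSpan ℝ C ≤ (LinearMap.ker (f : E →ₗ[ℝ] ℝ)).toAffineSubspace :=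
      affineSpan_le.2 fun v hv => hzero f hf hfu v hv
    fun v hv => hle hv
  have hopen : IsOpen (⋂ f ∈ {f ∈ F | f u < 0}, {v : E | f v < 0}) :=
    (hF.subset (Set.sep_subset F _)).isOpen_biInter fun f _ =>
      isOpen_lt f.continuous continuous_const
  refine mem_intrinsicInterior.2 ⟨⟨u, subset_affineSpan ℝ C hu⟩, mem_interior.2
    ⟨_, fun v hv f hf => ?_, hopen.preimage continuous_subtype_val, ?_⟩, rfl⟩
  · rcases (hu f hf).lt_or_eq with hlt | heq
    · exact (Set.mem_iInter₂.1 hv f ⟨hf, hlt⟩).le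
    · exact (hspan f hf heq v v.2).le
  · exact Set.mem_iInter₂.2 fun f hf => hf.2

lemma exists_add_smul_sub_mem_of_mem_intrinsicInterior {S : Set E} {u v : E}
    (hu : u ∈ intrinsicInterior ℝ S) (hv : v ∈ S) : ∃ t : ℝ, 0 < t ∧ u + t • (u - v) ∈ S := by
  obtain ⟨y, hy, rfl⟩ := mem_intrinsicInterior.1 hu
  let γ : ℝ → affineSpan ℝ S := fun t =>
    ⟨y + t • ((y : E) - v), by
      simpa [add_comm] using
        (affineSpan ℝ S).smul_vsub_vadd_mem t y.2 (subset_affineSpan ℝ S hv) y.2⟩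
  have hγ : Continuous γ := by fun_prop
  have hγ₀ : γ 0 = y := by simp [γ]
  have hev : ∀ᶠ t in nhds (0 : ℝ), γ t ∈ interior ((fun p : affineSpan ℝ S => (p : E)) ⁻¹' S) :=
    hγ.continuousAt.eventually_mem (hγ₀ ▸ isOpen_interior.mem_nhds hy)
  obtain ⟨t, htS, ht⟩ :=
    ((hev.filter_mono nhdsWithin_le_nhds).and (self_mem_nhdsWithin (s := Set.Ioi 0))).exists
  have hmem := interior_subset htS
  exact ⟨t, ht, hmem⟩

end RelativeInterior

section LayerCake

variable {ι : Type*} [Fintype ι]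

lemma integral_sum_superlevel (w l : ι → ℝ) {a b : ℝ} (ha : ∀ i, a ≤ l i) (hb : ∀ i, l i ≤ b) :
    IntervalIntegrable (fun c => ∑ i with c ≤ l i, w i) MeasureTheory.volume a b ∧
      ∫ c in a..b, ∑ i with c ≤ l i, w i = ∑ i, w i * (l i - a) := by
  have hsum : (fun c => ∑ i with c ≤ l i, w i) =
      fun c => ∑ i, Set.indicator {c | c ≤ l i} (fun _ => w i) c := by
    simp only [Finset.sum_filter, Set.indicator_apply, Set.mem_ofPred_eq]
  have hint (i : ι) : IntervalIntegrable (Set.indicator {c | c ≤ l i} fun _ => w i)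
      MeasureTheory.volume a b := by
    rw [intervalIntegrable_iff]
    exact (MeasureTheory.integrableOn_const (by simp)).indicator measurableSet_Iic
  rw [hsum, intervalIntegral.integral_finsetSum fun i _ => hint i]
  refine ⟨?_, Finset.sum_congr rfl fun i _ => ?_⟩
  · simpa only [Finset.sum_fn] using IntervalIntegrable.sum Finset.univ fun i _ => hint i
  · rw [intervalIntegral.integral_indicator ⟨ha i, hb i⟩, intervalIntegral.integral_const,
      smul_eq_mul, mul_comm]

lemma sum_mul_pos_of_sum_sublevel_neg {w l : ι → ℝ} (hw : ∑ i, w i = 0)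
    (hneg : ∀ c i j, l i < c → c ≤ l j → ∑ k with l k < c, w k < 0) {i j : ι} (hij : l i < l j) :
    0 < ∑ k, w k * l k := by
  have : Nonempty ι := ⟨i⟩
  obtain ⟨p, hp⟩ := Finite.exists_min l
  obtain ⟨q, hq⟩ := Finite.exists_max l
  obtain ⟨hint, heq⟩ := integral_sum_superlevel w l hp hq
  have hsuper : ∀ c ∈ Set.Ioo (l p) (l q), 0 < ∑ k with c ≤ l k, w k := fun c hc => by
    have hsplit := Finset.sum_filter_add_sum_filter_not Finset.univ (fun k => l k < c) w
    simp only [not_lt] at hsplit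
    linarith [hneg c p q hc.1 hc.2.le]
  calc 0 < ∫ c in l p..l q, ∑ k with c ≤ l k, w k :=
        intervalIntegral.intervalIntegral_pos_of_pos_on hint hsuper
          ((hp i).trans_lt (hij.trans_le (hq j)))
    _ = ∑ k, w k * l k := by
        rw [heq]
        simp only [mul_sub, Finset.sum_sub_distrib, ← Finset.sum_mul, hw, zero_mul, sub_zero]

end LayerCake

section Minimization

variable {E : Type*} [NormedAddCommGroup E] [NormedSpace ℝ E]

lemma apply_zero_lt_apply_smul_of_convexOn {f : E → ℝ} (hf : ConvexOn ℝ Set.univ f) {v : E}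
    {r s : ℝ} (hr : 0 < r) (hrs : r ≤ s) (hlt : f 0 < f (r • v)) : f 0 < f (s • v) := by
  have hs : 0 < s := hr.trans_le hrs
  have hmem : r • v ∈ segment ℝ 0 (s • v) := by
    rw [segment_eq_image']
    exact ⟨r / s, ⟨by positivity, (div_le_one hs).2 hrs⟩, by simp [smul_smul, hs.ne']⟩
  exact (lt_max_iff.1 (hlt.trans_le
    (hf.le_max_of_mem_segment (Set.mem_univ _) (Set.mem_univ _) hmem))).resolve_left (lt_irrefl _)

variable [ProperSpace E] {X : Type*} [TopologicalSpace X] {K : Set X} {f : X → E → ℝ}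

lemma exists_forall_lt_of_ray_growth (hK : IsCompact K) (hf : Continuous (Function.uncurry f))
    (hconv : ∀ x ∈ K, ConvexOn ℝ Set.univ (f x))
    (hray : ∀ x ∈ K, ∀ v ≠ 0, ∃ r > (0 : ℝ), f x 0 < f x (r • v)) :
    ∃ ρ > (0 : ℝ), ∀ x ∈ K, ∀ v, ρ < ‖v‖ → f x 0 < f x v := by
  let S : Set (X × E) := K ×ˢ Metric.sphere 0 1
  have hS : IsCompact S := hK.prod (isCompact_sphere _ _)
  -- By convexity a radius may be enlarged, so the radii of two sets can be combined.
  obtain ⟨ρ, hρ, hlt⟩ : ∃ ρ > (0 : ℝ), ∀ p ∈ S, p ∈ S → f p.1 0 < f p.1 (ρ • p.2) := by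
    refine hS.induction_on (p := fun T => ∃ ρ > (0 : ℝ), ∀ p ∈ T, p ∈ S →
      f p.1 0 < f p.1 (ρ • p.2)) ⟨1, one_pos, by simp⟩ ?_ ?_ ?_
    · rintro T T' hT ⟨ρ, hρ, hlt⟩
      exact ⟨ρ, hρ, fun p hp => hlt p (hT hp)⟩
    · rintro T T' ⟨ρ, hρ, hlt⟩ ⟨ρ', hρ', hlt'⟩
      refine ⟨max ρ ρ', lt_max_of_lt_left hρ, fun p hp hpS => ?_⟩
      rcases hp with hp | hp
      · exact apply_zero_lt_apply_smul_of_convexOn (hconv _ hpS.1) hρ (le_max_left _ _)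
          (hlt p hp hpS)
      · exact apply_zero_lt_apply_smul_of_convexOn (hconv _ hpS.1) hρ' (le_max_right _ _)
          (hlt' p hp hpS)
    · rintro ⟨x, v⟩ ⟨hx, hv⟩
      obtain ⟨r, hr, hlt⟩ := hray x hx v (ne_zero_of_mem_unit_sphere ⟨v, hv⟩)
      have hopen : IsOpen {p : X × E | f p.1 0 < f p.1 (r • p.2)} :=
        isOpen_lt (hf.comp (by fun_prop : Continuous fun p : X × E => (p.1, (0 : E))))
          (hf.comp (by fun_prop : Continuous fun p : X × E => (p.1, r • p.2)))
      exact ⟨_, mem_nhdsWithin_of_mem_nhds (hopen.mem_nhds hlt), r, hr, fun p hp _ => hp⟩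
  refine ⟨ρ, hρ, fun x hx v hv => ?_⟩
  have hv₀ : ‖v‖ ≠ 0 := (hρ.trans hv).ne'
  have hmem : (x, ‖v‖⁻¹ • v) ∈ S := ⟨hx, by simp [norm_smul, hv₀]⟩
  simpa [smul_smul, hv₀] using
    apply_zero_lt_apply_smul_of_convexOn (hconv x hx) hρ hv.le (hlt _ hmem hmem)

lemma exists_forall_le_of_ray_growth (hK : IsCompact K) (hne : K.Nonempty)
    (hf : Continuous (Function.uncurry f)) (hconv : ∀ x ∈ K, ConvexOn ℝ Set.univ (f x))
    (hray : ∀ x ∈ K, ∀ v ≠ 0, ∃ r > (0 : ℝ), f x 0 < f x (r • v)) :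
    ∃ x₀ ∈ K, ∃ v₀, ∀ x ∈ K, ∀ v, f x₀ v₀ ≤ f x v := by
  obtain ⟨ρ, hρ, hlt⟩ := exists_forall_lt_of_ray_growth hK hf hconv hray
  obtain ⟨⟨x₀, v₀⟩, ⟨hx₀, -⟩, hmin⟩ := (hK.prod (isCompact_closedBall (0 : E) ρ)).exists_isMinOn
    (hne.prod (Metric.nonempty_closedBall.2 hρ.le)) hf.continuousOn
  refine ⟨x₀, hx₀, v₀, fun x hx v => ?_⟩
  by_cases hv : ‖v‖ ≤ ρ
  · exact hmin (show (x, v) ∈ _ from ⟨hx, by simpa using hv⟩)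
  · exact (hmin (show (x, (0 : E)) ∈ _ from ⟨hx, by simpa using hρ.le⟩)).trans
      (hlt x hx v (not_le.1 hv)).le

end Minimization

section Representations

variable {V A : Type} {src tgt : A → V} {n m : V → ℕ}

/-- Families of endomorphisms of the spaces `ℝ^(n x)`; the invertible ones are the elements of the
group `∏ GL(n x)`. -/
abbrev VertexEnd (n : V → ℕ) : Type := ∀ x, Matrix (Fin (n x)) (Fin (n x)) ℝ

/-! ### The moment map -/

section MomentMap

variable [Fintype A] (U : Rep src tgt n) {σ : V → ℝ}

/-- The moment map of the action of `∏ O(n x)` on the representation space: the left-hand side of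
the critical equation. -/
noncomputable def momentMap [DecidableEq V] (x : V) : Matrix (Fin (n x)) (Fin (n x)) ℝ :=
  (∑ a : A, if h : src a = x then
      Matrix.reindex (finCongr (congrArg n h)) (finCongr (congrArg n h)) ((U a)ᵀ * U a) else 0) -
    ∑ a : A, if h : tgt a = x then
      Matrix.reindex (finCongr (congrArg n h)) (finCongr (congrArg n h)) (U a * (U a)ᵀ) else 0

/-- `U` is `σ`-critical, for a real weight `σ`. -/
def IsCriticalAt [DecidableEq V] (σ : V → ℝ) : Prop :=
  ∀ x, momentMap U x = σ x • (1 : Matrix (Fin (n x)) (Fin (n x)) ℝ)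

/-- The trace pairing of the moment map with a family of endomorphisms, expanded over the arrows
so that no reindexing between vertices is needed. -/
noncomputable def momentPairing (X : VertexEnd n) : ℝ :=
  ∑ a, (trace (X (src a) * ((U a)ᵀ * U a)) - trace (X (tgt a) * (U a * (U a)ᵀ)))

variable {U}

lemma sum_trace_mul_sum_reindex [Fintype V] [DecidableEq V] (f : A → V)
    (X : VertexEnd n) (N : ∀ a, Matrix (Fin (n (f a))) (Fin (n (f a))) ℝ) :
    ∑ x, trace (X x * ∑ a, if h : f a = x then
        Matrix.reindex (finCongr (congrArg n h)) (finCongr (congrArg n h)) (N a) else 0) =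
      ∑ a, trace (X (f a) * N a) := by
  simp only [Matrix.mul_sum, trace_sum]
  rw [Finset.sum_comm]
  refine Finset.sum_congr rfl fun a _ => ?_
  rw [Finset.sum_eq_single (f a) (fun x _ hx => by simp [hx.symm]) (by simp), dif_pos rfl]
  rfl

lemma sum_trace_mul_momentMap [Fintype V] [DecidableEq V] (U : Rep src tgt n)
    (X : VertexEnd n) :
    ∑ x, trace (X x * momentMap U x) = momentPairing U X := by
  simp only [momentMap, Matrix.mul_sub, trace_sub, Finset.sum_sub_distrib, momentPairing]
  exact congrArg₂ _ (sum_trace_mul_sum_reindex src X _) (sum_trace_mul_sum_reindex tgt X _)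

lemma isSymm_momentMap [DecidableEq V] (U : Rep src tgt n) (x : V) : (momentMap U x).IsSymm := by
  refine .sub ?_ ?_ <;>
  · rw [IsSymm, transpose_sum]
    refine Finset.sum_congr rfl fun a _ => ?_
    split_ifs with h
    · simp [transpose_submatrix]
    · exact transpose_zero

lemma IsCriticalAt.momentPairing_eq [Fintype V] [DecidableEq V] (hU : IsCriticalAt U σ)
    (X : VertexEnd n) :
    momentPairing U X = ∑ x, σ x * trace (X x) := by
  rw [← sum_trace_mul_momentMap]
  exact Finset.sum_congr rfl fun x _ => by simp [hU x]

lemma isCriticalAt_of_momentPairing_eq [Fintype V] [DecidableEq V]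
    (hU : ∀ X : VertexEnd n, (∀ x, (X x).IsSymm) →
      momentPairing U X = ∑ x, σ x * trace (X x)) : IsCriticalAt U σ := by
  let D (x : V) : Matrix (Fin (n x)) (Fin (n x)) ℝ := momentMap U x - σ x • 1
  have hD (x : V) : (D x).IsSymm := (isSymm_momentMap U x).sub (isSymm_one.smul _)
  have hsum : ∑ x, trace ((D x)ᵀ * D x) = 0 := by
    have hpair := hU D hD
    rw [← sum_trace_mul_momentMap, ← sub_eq_zero, ← Finset.sum_sub_distrib] at hpair
    rw [← hpair]
    refine Finset.sum_congr rfl fun x _ => ?_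
    rw [(hD x).eq, ← smul_eq_mul (σ x), ← trace_smul, ← trace_sub]
    congr 1
    simp [D, Matrix.mul_sub]
  intro x
  rw [Finset.sum_eq_zero_iff_of_nonneg fun x _ => trace_transpose_mul_self_nonneg (D x)] at hsum
  exact sub_eq_zero.1 (trace_transpose_mul_self_eq_zero_iff.1 (hsum x (Finset.mem_univ x)))

end MomentMap

/-! ### Subrepresentations and stability -/

/-- The family `g` of linear maps is a morphism of representations from `U` to `U'`. -/
def IsHom (U : Rep src tgt n) (U' : Rep src tgt m)
    (g : ∀ x, (Fin (n x) → ℝ) →ₗ[ℝ] (Fin (m x) → ℝ)) : Prop :=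
  ∀ a v, g (tgt a) ((U a).mulVec v) = (U' a).mulVec (g (src a) v)

namespace Subrep

variable {U : Rep src tgt n} {U' : Rep src tgt m}

/-- The whole representation, as a subrepresentation of itself. -/
instance : Top (Subrep src tgt n U) := ⟨⟨⊤, fun _ _ _ => trivial⟩⟩

@[simp]
lemma top_space : (⊤ : Subrep src tgt n U).space = ⊤ := rfl

/-- The image of a subrepresentation under a morphism. -/
def map (W : Subrep src tgt n U) {g : ∀ x, (Fin (n x) → ℝ) →ₗ[ℝ] (Fin (m x) → ℝ)}
    (hg : IsHom U U' g) : Subrep src tgt m U' where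
  space x := (W.space x).map (g x)
  invariant a := by
    rintro _ ⟨v, hv, rfl⟩
    exact ⟨(U a).mulVec v, W.invariant a v hv, hg a v⟩

variable [Fintype V]

/-- The value `σ · dim W` of a real weight on the dimension vector of a subrepresentation. -/
noncomputable def weight (σ : V → ℝ) (W : Subrep src tgt n U) : ℝ :=
  ∑ x, σ x * Module.finrank ℝ (W.space x)

/-- `W` is `σ`-stable as a representation in its own right, for a real weight `σ`. -/
def IsStable (σ : V → ℝ) (W : Subrep src tgt n U) : Prop :=
  W.weight σ = 0 ∧
    ∀ W' : Subrep src tgt n U, W'.space < W.space → W'.space ≠ ⊥ → W'.weight σ < 0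

variable {σ : V → ℝ} {g : ∀ x, (Fin (n x) → ℝ) →ₗ[ℝ] (Fin (m x) → ℝ)}

lemma weight_top (σ : V → ℝ) : (⊤ : Subrep src tgt n U).weight σ = ∑ x, σ x * n x := by
  simp [weight]

lemma weight_map (hg : IsHom U U' g) (hinj : ∀ x, Function.Injective (g x)) (σ : V → ℝ)
    (W : Subrep src tgt n U) : (W.map hg).weight σ = W.weight σ := by
  refine Finset.sum_congr rfl fun x _ => congrArg (fun k : ℕ => σ x * (k : ℝ)) ?_
  exact (Submodule.equivMapOfInjective (g x) (hinj x) (W.space x)).finrank_eq.symm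

lemma isStable_top_of_range_eq {W' : Subrep src tgt m U'} (hW' : W'.IsStable σ)
    (hg : IsHom U U' g) (hinj : ∀ x, Function.Injective (g x))
    (hrange : ∀ x, LinearMap.range (g x) = W'.space x) :
    (⊤ : Subrep src tgt n U).IsStable σ := by
  have htop : ((⊤ : Subrep src tgt n U).map hg).space = W'.space :=
    funext fun x => (Submodule.map_top _).trans (hrange x)
  have hspace : Function.Injective
      fun (S : ∀ x, Submodule ℝ (Fin (n x) → ℝ)) x => (S x).map (g x) := fun S T hST =>
    funext fun x => Submodule.map_injective_of_injective (hinj x) (congrFun hST x)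
  refine ⟨?_, fun W hW hW₀ => ?_⟩
  · rw [← weight_map hg hinj, weight, htop]
    exact hW'.1
  · rw [← weight_map hg hinj]
    refine hW'.2 _ (htop ▸ lt_of_le_of_ne (fun x => Submodule.map_mono le_top)
      (hspace.ne hW.ne)) fun hbot => hW₀ (hspace (hbot.trans ?_))
    exact funext fun x => (Submodule.map_bot (g x)).symm

lemma isStable_of_isStableSub {σ : V → ℤ} {W : Subrep src tgt n U}
    (hW : IsStableSub src tgt n U σ W) : W.IsStable fun x => σ x := by
  refine ⟨by simp only [weight]; exact mod_cast hW.1, fun W' hlt hbot => ?_⟩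
  simp only [weight]
  exact mod_cast hW.2 W' hlt.le hbot hlt.ne

end Subrep

/-! ### Base change -/

lemma act_act (C B : VertexEnd n) (R : Rep src tgt n) :
    act src tgt n C (act src tgt n B R) = act src tgt n (fun x => C x * B x) R := by
  funext a
  simp only [act, Matrix.mul_inv_rev, Matrix.mul_assoc]

lemma act_one (R : Rep src tgt n) : act src tgt n (fun _ => 1) R = R := by
  funext a
  simp [act]

lemma isHom_act {B : VertexEnd n} (hB : ∀ x, IsUnit (B x).det) (R : Rep src tgt n) :
    IsHom R (act src tgt n B R) fun x => toLin' (B x) := fun a v => by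
  simp [act, mulVec_mulVec, Matrix.mul_assoc, nonsing_inv_mul _ (hB (src a))]

variable [Fintype V]

lemma orbitCone_subset_of_injective {U U' : Rep src tgt n}
    {g : ∀ x, (Fin (n x) → ℝ) →ₗ[ℝ] (Fin (n x) → ℝ)} (hg : IsHom U U' g)
    (hinj : ∀ x, Function.Injective (g x)) : OrbitCone src tgt n U' ⊆ OrbitCone src tgt n U :=
  fun σ hσ => ⟨hσ.1, fun W => (Subrep.weight_map hg hinj σ W).symm.trans_le (hσ.2 _)⟩

lemma orbitCone_subset_orbitCone_act {B : VertexEnd n} (hB : ∀ x, IsUnit (B x).det)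
    (R : Rep src tgt n) :
    OrbitCone src tgt n (act src tgt n B R) ⊆ OrbitCone src tgt n R :=
  orbitCone_subset_of_injective (isHom_act hB R) fun x =>
    mulVec_injective_of_isUnit ((isUnit_iff_isUnit_det _).2 (hB x))

lemma orbitCone_act {B : VertexEnd n} (hB : ∀ x, IsUnit (B x).det) (R : Rep src tgt n) :
    OrbitCone src tgt n (act src tgt n B R) = OrbitCone src tgt n R := by
  refine (orbitCone_subset_orbitCone_act hB R).antisymm ?_
  have hinv := orbitCone_subset_orbitCone_act (B := fun x => (B x)⁻¹)
    (fun x => isUnit_nonsing_inv_det _ (hB x)) (act src tgt n B R)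
  simpa only [act_act, nonsing_inv_mul _ (hB _), act_one] using hinv

end Representations

section CriticalToInterior

variable {V A : Type} {src tgt : A → V} {n : V → ℕ} [Fintype V]

/-! ### Critical representations have interior weights -/

section Critical

variable [DecidableEq V] [Fintype A] {U : Rep src tgt n} {σ : V → ℝ}

lemma IsCriticalAt.sum_mul_dim_eq_zero (hU : IsCriticalAt U σ) : ∑ x, σ x * n x = 0 := by
  have h := hU.momentPairing_eq fun _ => 1
  simp only [trace_one, Fintype.card_fin] at h
  rw [← h]
  exact Finset.sum_eq_zero fun a _ => by simp [trace_mul_comm (U a)ᵀ]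

lemma IsCriticalAt.weight_eq (hU : IsCriticalAt U σ) (W : Subrep src tgt n U)
    {P : VertexEnd n} (hsymm : ∀ x, (P x).IsSymm)
    (hproj : ∀ x, LinearMap.IsProj (W.space x) (toLin' (P x))) :
    W.weight σ =
      -∑ a, trace ((P (tgt a) * U a - U a * P (src a))ᵀ * (P (tgt a) * U a - U a * P (src a))) := by
  have hidem (x : V) : IsIdempotentElem (P x) := by
    have h := (hproj x).isIdempotentElem
    rwa [IsIdempotentElem, Module.End.mul_eq_comp, ← toLin'_mul, toLin'.injective.eq_iff] at h
  have hinv (a : A) : P (tgt a) * (U a * P (src a)) = U a * P (src a) := by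
    refine ext_of_mulVec_single fun i => ?_
    rw [← mulVec_mulVec, ← mulVec_mulVec]
    exact (hproj (tgt a)).map_id _ (W.invariant a _ ((hproj (src a)).map_mem _))
  have htrace (x : V) : (Module.finrank ℝ (W.space x) : ℝ) = trace (P x) := by
    rw [← (hproj x).trace, trace_toLin'_eq]
  simp only [Subrep.weight, htrace]
  rw [← hU.momentPairing_eq P, momentPairing, ← Finset.sum_neg_distrib]
  exact Finset.sum_congr rfl fun a _ =>
    trace_isProj_defect (hsymm _) (hidem _) (hsymm _) (hidem _) (hinv a)

lemma IsCriticalAt.weight_nonpos (hU : IsCriticalAt U σ) (W : Subrep src tgt n U) :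
    W.weight σ ≤ 0 := by
  choose P hsymm hproj using fun x => exists_isSymm_isProj (W.space x)
  rw [hU.weight_eq W hsymm hproj, neg_nonpos]
  exact Finset.sum_nonneg fun a _ => trace_transpose_mul_self_nonneg _

lemma IsCriticalAt.exists_isCompl (hU : IsCriticalAt U σ) {W : Subrep src tgt n U}
    (hW : W.weight σ = 0) :
    ∃ W' : Subrep src tgt n U, ∀ x, IsCompl (W.space x) (W'.space x) := by
  choose P hsymm hproj using fun x => exists_isSymm_isProj (W.space x)
  rw [hU.weight_eq W hsymm hproj, neg_eq_zero,
    Finset.sum_eq_zero_iff_of_nonneg fun a _ => trace_transpose_mul_self_nonneg _] at hW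
  have hcomm (a : A) : P (tgt a) * U a = U a * P (src a) :=
    sub_eq_zero.1 (trace_transpose_mul_self_eq_zero_iff.1 (hW a (Finset.mem_univ a)))
  refine ⟨⟨fun x => LinearMap.ker (toLin' (P x)), fun a v hv => ?_⟩, fun x => (hproj x).isCompl⟩
  rw [LinearMap.mem_ker, toLin'_apply] at hv ⊢
  rw [mulVec_mulVec, hcomm, ← mulVec_mulVec, hv, mulVec_zero]

end Critical

/-- The functional `σ ↦ σ · e` on the space of real weights. -/
noncomputable def dimFunctional (e : V → ℕ) : (V → ℝ) →L[ℝ] ℝ :=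
  ∑ x, (e x : ℝ) • ContinuousLinearMap.proj x

lemma dimFunctional_apply (e : V → ℕ) (σ : V → ℝ) : dimFunctional e σ = ∑ x, σ x * e x := by
  simp [dimFunctional, mul_comm]

/-- The finitely many functionals whose sublevel sets `{f ≤ 0}` cut out the orbit cone. The equality
`σ · n = 0` is split into two inequalities, one of them coming from the subrepresentation `⊤`. -/
def coneFunctionals (U : Rep src tgt n) : Set ((V → ℝ) →L[ℝ] ℝ) :=
  insert (-dimFunctional n)
    (Set.range fun W : Subrep src tgt n U => dimFunctional fun x => Module.finrank ℝ (W.space x))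

lemma finite_coneFunctionals (U : Rep src tgt n) : (coneFunctionals U).Finite := by
  classical
  refine .insert _ (((Set.finite_Iic n).image dimFunctional).subset ?_)
  rintro _ ⟨W, rfl⟩
  exact ⟨_, fun x => by simpa using (W.space x).finrank_le, rfl⟩

lemma mem_orbitCone_iff {U : Rep src tgt n} {σ : V → ℝ} :
    σ ∈ OrbitCone src tgt n U ↔
      ∑ x, σ x * n x = 0 ∧ ∀ W : Subrep src tgt n U, W.weight σ ≤ 0 := Iff.rfl

lemma orbitCone_eq (U : Rep src tgt n) :
    OrbitCone src tgt n U = {σ | ∀ f ∈ coneFunctionals U, f σ ≤ 0} := by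
  ext σ
  simp only [coneFunctionals, mem_orbitCone_iff, Set.mem_ofPred_eq, Set.forall_mem_insert,
    Set.forall_mem_range, _root_.neg_apply, dimFunctional_apply, neg_nonpos]
  exact ⟨fun hσ => ⟨hσ.1.ge, hσ.2⟩, fun hσ =>
    ⟨((Subrep.weight_top σ).symm.trans_le (hσ.2 ⊤)).antisymm hσ.1, hσ.2⟩⟩

lemma weight_eq_zero_of_isCompl {U : Rep src tgt n} {σ : V → ℝ} (hσ : σ ∈ OrbitCone src tgt n U)
    {W W' : Subrep src tgt n U} (hWW' : ∀ x, IsCompl (W.space x) (W'.space x)) :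
    W.weight σ = 0 := by
  have hadd : W.weight σ + W'.weight σ = 0 := by
    rw [← hσ.1, Subrep.weight, Subrep.weight, ← Finset.sum_add_distrib]
    refine Finset.sum_congr rfl fun x _ => ?_
    rw [← mul_add, ← Nat.cast_add, Submodule.finrank_add_eq_of_isCompl (hWW' x),
      Module.finrank_fin_fun]
  have hle := (mem_orbitCone_iff.1 hσ).2
  linarith [hle W, hle W']

lemma mem_intrinsicInterior_orbitCone {U : Rep src tgt n} {σ : V → ℝ}
    (hσ : σ ∈ OrbitCone src tgt n U)
    (hcompl : ∀ W : Subrep src tgt n U, W.weight σ = 0 →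
      ∃ W' : Subrep src tgt n U, ∀ x, IsCompl (W.space x) (W'.space x)) :
    σ ∈ intrinsicInterior ℝ (OrbitCone src tgt n U) := by
  rw [orbitCone_eq] at hσ ⊢
  refine mem_intrinsicInterior_of_forall_eq_zero (finite_coneFunctionals U) hσ
    fun f hf hfσ τ hτ => ?_
  have hτ' : τ ∈ OrbitCone src tgt n U := (orbitCone_eq U).symm ▸ hτ
  obtain rfl | ⟨W, rfl⟩ := hf
  · rw [_root_.neg_apply, dimFunctional_apply, hτ'.1, neg_zero]
  · rw [dimFunctional_apply] at hfσ ⊢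
    obtain ⟨W', hWW'⟩ := hcompl W hfσ
    exact weight_eq_zero_of_isCompl hτ' hWW'

lemma IsCriticalAt.mem_intrinsicInterior [DecidableEq V] [Fintype A] {R : Rep src tgt n}
    {σ : V → ℝ} {B : VertexEnd n} (hB : ∀ x, IsUnit (B x).det)
    (hcrit : IsCriticalAt (act src tgt n B R) σ) :
    σ ∈ intrinsicInterior ℝ (OrbitCone src tgt n R) := by
  rw [← orbitCone_act hB]
  exact mem_intrinsicInterior_orbitCone ⟨hcrit.sum_mul_dim_eq_zero, hcrit.weight_nonpos⟩
    fun W => hcrit.exists_isCompl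

end CriticalToInterior

section Energy

variable {V A : Type} {src tgt : A → V} {n : V → ℕ}

/-! ### Weights growing along the arrows of a stable representation -/

section Sublevel

variable {N : Rep src tgt n} {σ : V → ℝ} {l : ∀ x, Fin (n x) → ℝ}

/-- The coordinate subrepresentation spanned by the basis vectors on which `l < c`. -/
def sublevel (hN : ∀ a i j, N a i j ≠ 0 → l (tgt a) i ≤ l (src a) j) (c : ℝ) :
    Subrep src tgt n N where
  space x := ⨅ i ∈ {i | c ≤ l x i}, LinearMap.ker (LinearMap.proj i)
  invariant a v hv := by
    simp only [Submodule.mem_iInf, LinearMap.mem_ker, LinearMap.proj_apply,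
      Set.mem_ofPred_eq] at hv ⊢
    intro i hi
    rw [mulVec, dotProduct]
    refine Finset.sum_eq_zero fun j _ => ?_
    by_cases hij : N a i j = 0
    · exact mul_eq_zero_of_left hij _
    · exact mul_eq_zero_of_right _ (hv j (hi.trans (hN a i j hij)))

lemma mem_sublevel_space_iff {hN : ∀ a i j, N a i j ≠ 0 → l (tgt a) i ≤ l (src a) j} {c : ℝ}
    {x : V} {v : Fin (n x) → ℝ} : v ∈ (sublevel hN c).space x ↔ ∀ i, c ≤ l x i → v i = 0 := by
  simp [sublevel]

variable [Fintype V]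

lemma weight_sublevel (hN : ∀ a i j, N a i j ≠ 0 → l (tgt a) i ≤ l (src a) j) (c : ℝ) :
    (sublevel hN c).weight σ = ∑ p : Σ x, Fin (n x) with l p.1 p.2 < c, σ p.1 := by
  have hrank (x : V) :
      Module.finrank ℝ ((sublevel hN c).space x) = Fintype.card {i // l x i < c} := by
    rw [← Module.finrank_fintype_fun_eq_card ℝ]
    refine (LinearMap.iInfKerProjEquiv ℝ (fun _ => ℝ) (I := {i | l x i < c}) ?_ ?_).finrank_eq
    · exact Set.disjoint_left.2 fun i (hi : l x i < c) => hi.not_ge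
    · exact fun i _ => lt_or_ge (l x i) c
  rw [Finset.sum_filter, Fintype.sum_sigma, Subrep.weight]
  refine Finset.sum_congr rfl fun x _ => ?_
  simp [hrank, Fintype.card_subtype, ← Finset.sum_filter, mul_comm]

lemma sum_mul_pos_of_isStable_top (hstable : (⊤ : Subrep src tgt n N).IsStable σ)
    (hN : ∀ a i j, N a i j ≠ 0 → l (tgt a) i ≤ l (src a) j) {p q : Σ x, Fin (n x)}
    (hpq : l p.1 p.2 < l q.1 q.2) : 0 < ∑ x, σ x * ∑ i, l x i := by
  have hsum : ∑ p : Σ x, Fin (n x), σ p.1 = 0 := by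
    rw [Fintype.sum_sigma, ← hstable.1, Subrep.weight_top]
    simp [mul_comm]
  have hneg : ∀ c (p q : Σ x, Fin (n x)), l p.1 p.2 < c → c ≤ l q.1 q.2 →
      ∑ k : Σ x, Fin (n x) with l k.1 k.2 < c, σ k.1 < 0 := fun c p q hp hq => by
    rw [← weight_sublevel hN]
    refine hstable.2 _ (lt_top_iff_ne_top.2 fun htop => ?_) fun hbot => ?_
    · have hmem : Pi.single q.2 1 ∈ (sublevel hN c).space q.1 := by simp [htop]
      simpa using mem_sublevel_space_iff.1 hmem q.2 hq
    · have hmem : Pi.single p.2 1 ∈ (sublevel hN c).space p.1 :=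
        mem_sublevel_space_iff.2 fun i hi =>
          Pi.single_eq_of_ne (by rintro rfl; exact hp.not_ge hi) _
      simp [hbot] at hmem
  have hpos := sum_mul_pos_of_sum_sublevel_neg hsum hneg hpq
  rw [Fintype.sum_sigma] at hpos
  simpa only [Finset.mul_sum] using hpos

end Sublevel

variable [Fintype V] [Fintype A]

/-! ### The energy on a maximal torus -/

/-- The Kempf–Ness energy of the torus element with entries `exp (l x i / 2)`. -/
noncomputable def diagEnergy (σ : V → ℝ) (N : Rep src tgt n) (l : ∀ x, Fin (n x) → ℝ) : ℝ :=
  ∑ a, ∑ i, ∑ j, N a i j ^ 2 * Real.exp (l (tgt a) i - l (src a) j) + ∑ x, σ x * ∑ i, l x i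

lemma convexOn_diagEnergy (σ : V → ℝ) (N : Rep src tgt n) :
    ConvexOn ℝ Set.univ (diagEnergy σ N) := by
  refine ⟨convex_univ, fun l _ l' _ s t hs ht hst => ?_⟩
  simp only [diagEnergy, smul_eq_mul, mul_add, Finset.mul_sum, Pi.add_apply, Pi.smul_apply]
  rw [add_add_add_comm]
  simp only [← Finset.sum_add_distrib]
  refine add_le_add (Finset.sum_le_sum fun a _ => Finset.sum_le_sum fun i _ =>
    Finset.sum_le_sum fun j _ => ?_) (Finset.sum_congr rfl fun x _ => ?_).le
  · have hexp := convexOn_exp.2 (Set.mem_univ (l (tgt a) i - l (src a) j))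
      (Set.mem_univ (l' (tgt a) i - l' (src a) j)) hs ht hst
    simp only [smul_eq_mul] at hexp
    calc _ = N a i j ^ 2 * Real.exp (s * (l (tgt a) i - l (src a) j) +
            t * (l' (tgt a) i - l' (src a) j)) := by ring_nf
      _ ≤ N a i j ^ 2 * (s * Real.exp (l (tgt a) i - l (src a) j) +
            t * Real.exp (l' (tgt a) i - l' (src a) j)) := by gcongr
      _ = _ := by ring
  · exact Finset.sum_congr rfl fun i _ => by ring

lemma diagEnergy_add_const {σ : V → ℝ} (hσ : ∑ x, σ x * n x = 0) (N : Rep src tgt n)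
    (l : ∀ x, Fin (n x) → ℝ) (c : ℝ) : diagEnergy σ N (c • 1 + l) = diagEnergy σ N l := by
  simp only [diagEnergy, Pi.add_apply, Pi.smul_apply, Pi.one_apply, smul_eq_mul, mul_one,
    add_sub_add_left_eq_sub, Finset.sum_add_distrib, Finset.sum_const, Finset.card_univ,
    Fintype.card_fin, nsmul_eq_mul, mul_add, ← mul_assoc, ← Finset.sum_mul, hσ, zero_mul, zero_add]

lemma tendsto_mul_exp_add_mul_atTop {b δ : ℝ} (hb : 0 < b) (hδ : 0 < δ) (s : ℝ) :
    Filter.Tendsto (fun r => b * Real.exp (r * δ) + r * s) Filter.atTop Filter.atTop := by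
  have hlin : Filter.Tendsto (fun r : ℝ => r * δ) Filter.atTop Filter.atTop :=
    Filter.tendsto_id.atTop_mul_const hδ
  have hquot := (Real.tendsto_mul_exp_add_div_pow_atTop b 0 1 hb).comp hlin
  refine (hlin.atTop_mul_atTop₀ (Filter.tendsto_atTop_add_const_right _ (s / δ) hquot)).congr' ?_
  filter_upwards [Filter.eventually_gt_atTop 0] with r hr
  simp only [Function.comp_apply]
  field_simp
  ring

lemma tendsto_diagEnergy_smul_atTop {σ : V → ℝ} {N : Rep src tgt n}
    (hN : (⊤ : Subrep src tgt n N).IsStable σ) {l : ∀ x, Fin (n x) → ℝ} {p q : Σ x, Fin (n x)}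
    (hpq : l p.1 p.2 < l q.1 q.2) :
    Filter.Tendsto (fun r : ℝ => diagEnergy σ N (r • l)) Filter.atTop Filter.atTop := by
  have hsplit (r : ℝ) : diagEnergy σ N (r • l) =
      ∑ a, ∑ i, ∑ j, N a i j ^ 2 * Real.exp (r * (l (tgt a) i - l (src a) j)) +
        r * ∑ x, σ x * ∑ i, l x i := by
    simp only [diagEnergy, Pi.smul_apply, smul_eq_mul, ← Finset.mul_sum, mul_sub,
      mul_left_comm _ r]
  have hnonneg (r : ℝ) (a i j) : 0 ≤ N a i j ^ 2 * Real.exp (r * (l (tgt a) i - l (src a) j)) := by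
    positivity
  by_cases hle : ∀ a i j, N a i j ≠ 0 → l (tgt a) i ≤ l (src a) j
  · refine Filter.tendsto_atTop_mono (fun r => ?_)
      (Filter.tendsto_id.atTop_mul_const (sum_mul_pos_of_isStable_top hN hle hpq))
    rw [hsplit, id_eq]
    exact le_add_of_nonneg_left (Finset.sum_nonneg fun a _ => Finset.sum_nonneg fun i _ =>
      Finset.sum_nonneg fun j _ => hnonneg r a i j)
  · push Not at hle
    obtain ⟨a, i, j, hne, hlt⟩ := hle
    refine Filter.tendsto_atTop_mono (fun r => ?_) (tendsto_mul_exp_add_mul_atTop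
      (by positivity : 0 < N a i j ^ 2) (sub_pos.2 hlt) (∑ x, σ x * ∑ i, l x i))
    rw [hsplit]
    gcongr
    calc _ ≤ ∑ j, N a i j ^ 2 * Real.exp (r * (l (tgt a) i - l (src a) j)) :=
          Finset.single_le_sum (fun j _ => hnonneg r a i j) (Finset.mem_univ j)
      _ ≤ ∑ i, ∑ j, N a i j ^ 2 * Real.exp (r * (l (tgt a) i - l (src a) j)) :=
          Finset.single_le_sum (f := fun i => ∑ j, _)
            (fun i _ => Finset.sum_nonneg fun j _ => hnonneg r a i j) (Finset.mem_univ i)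
      _ ≤ _ := Finset.single_le_sum (f := fun a => ∑ i, ∑ j, _) (fun a _ =>
          Finset.sum_nonneg fun i _ => Finset.sum_nonneg fun j _ => hnonneg r a i j)
          (Finset.mem_univ a)

end Energy

/-! ### Stable representations have a critical point in their orbit -/

section StableToCritical

variable {V A : Type} {src tgt : A → V} {n : V → ℕ} {σ : V → ℝ}

/-- The representation `U` in the coordinates given by the columns of the orthogonal matrices `K x`.
Transposes replace the inverses of `act`, so that it is polynomial in `K`. -/
def rotate (K : VertexEnd n) (U : Rep src tgt n) : Rep src tgt n :=
  fun a => (K (tgt a))ᵀ * U a * K (src a)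

lemma rotate_eq_act {K : VertexEnd n} (hK : ∀ x, (K x)ᵀ * K x = 1) (U : Rep src tgt n) :
    rotate K U = act src tgt n (fun x => (K x)ᵀ) U := by
  funext a
  rw [rotate, act, inv_eq_right_inv (hK _)]

lemma Subrep.IsStable.act [Fintype V] {U : Rep src tgt n}
    (hU : (⊤ : Subrep src tgt n U).IsStable σ) {B : VertexEnd n} (hB : ∀ x, IsUnit (B x).det) :
    (⊤ : Subrep src tgt n (act src tgt n B U)).IsStable σ := by
  have hB' (x : V) : IsUnit (B x)⁻¹.det := isUnit_nonsing_inv_det _ (hB x)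
  have hhom := isHom_act hB' (QuiverRI.act src tgt n B U)
  simp only [act_act, nonsing_inv_mul _ (hB _), act_one] at hhom
  refine Subrep.isStable_top_of_range_eq hU hhom
    (fun x => mulVec_injective_of_isUnit ((isUnit_iff_isUnit_det _).2 (hB' x))) fun x => ?_
  exact LinearMap.range_eq_top.2 (mulVec_surjective_iff_isUnit.2
    ((isUnit_iff_isUnit_det _).2 (hB' x)))

lemma continuous_rotate (U : Rep src tgt n) (a : A) :
    Continuous fun K : VertexEnd n => rotate K U a := by
  unfold rotate
  fun_prop

lemma mem_span_one_of_forall_not_lt {l : ∀ x, Fin (n x) → ℝ}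
    (hl : ∀ p q : Σ x, Fin (n x), ¬ l p.1 p.2 < l q.1 q.2) : l ∈ Submodule.span ℝ {1} := by
  rw [Submodule.mem_span_singleton]
  by_cases hne : Nonempty (Σ x, Fin (n x))
  · obtain ⟨p⟩ := hne
    refine ⟨l p.1 p.2, funext fun x => funext fun i => ?_⟩
    simpa using le_antisymm (not_lt.1 (hl ⟨x, i⟩ p)) (not_lt.1 (hl p ⟨x, i⟩))
  · exact ⟨0, funext fun x => funext fun i => (hne ⟨⟨x, i⟩⟩).elim⟩

variable [Fintype A]

lemma momentPairing_rotate (U : Rep src tgt n) {K : VertexEnd n}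
    (hK : ∀ x, (K x)ᵀ * K x = 1) (X : VertexEnd n) :
    momentPairing (rotate K U) X = momentPairing U fun x => K x * X x * (K x)ᵀ := by
  have hK' (x : V) : K x * (K x)ᵀ = 1 := mul_eq_one_comm.1 (hK x)
  refine Finset.sum_congr rfl fun a _ => congrArg₂ _ ?_ ?_
  · calc _ = trace (X (src a) * (K (src a))ᵀ * (U a)ᵀ * (K (tgt a) * (K (tgt a))ᵀ) * U a *
          K (src a)) := by
          simp only [rotate, transpose_mul, transpose_transpose, Matrix.mul_assoc]
      _ = _ := by
          rw [hK', Matrix.mul_one, trace_mul_comm]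
          simp only [Matrix.mul_assoc]
  · calc _ = trace (X (tgt a) * (K (tgt a))ᵀ * U a * (K (src a) * (K (src a))ᵀ) * (U a)ᵀ *
          K (tgt a)) := by
          simp only [rotate, transpose_mul, transpose_transpose, Matrix.mul_assoc]
      _ = _ := by
          rw [hK', Matrix.mul_one, trace_mul_comm]
          simp only [Matrix.mul_assoc]

variable [Fintype V]

lemma continuous_diagEnergy_rotate {T : Type*} [TopologicalSpace T] (U : Rep src tgt n)
    {K : T → VertexEnd n} (hK : Continuous K)
    {l : T → ∀ x, Fin (n x) → ℝ} (hl : Continuous l) :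
    Continuous fun t => diagEnergy σ (rotate (K t) U) (l t) := by
  have hrotate (a : A) (i j) : Continuous fun t => rotate (K t) U a i j :=
    ((continuous_rotate U a).comp hK).matrix_elem i j
  unfold diagEnergy
  fun_prop

lemma tendsto_diagEnergy_rotate_smul_atTop {U : Rep src tgt n}
    (hU : (⊤ : Subrep src tgt n U).IsStable σ) {K : VertexEnd n}
    (hK : ∀ x, (K x)ᵀ * K x = 1) {l : ∀ x, Fin (n x) → ℝ} (hl : l ∉ Submodule.span ℝ {1}) :
    Filter.Tendsto (fun r : ℝ => diagEnergy σ (rotate K U) (r • l)) Filter.atTop Filter.atTop := by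
  have hstable : (⊤ : Subrep src tgt n (rotate K U)).IsStable σ := by
    rw [rotate_eq_act hK]
    exact hU.act fun x => isUnit_det_transpose_of_orthogonal (hK x)
  obtain ⟨p, q, hpq⟩ : ∃ p q : Σ x, Fin (n x), l p.1 p.2 < l q.1 q.2 := by
    by_contra! hconst
    exact hl (mem_span_one_of_forall_not_lt fun p q => (hconst p q).not_gt)
  exact tendsto_diagEnergy_smul_atTop hstable hpq

lemma exists_forall_diagEnergy_rotate_le {U : Rep src tgt n}
    (hU : (⊤ : Subrep src tgt n U).IsStable σ) :
    ∃ (K : VertexEnd n) (l : ∀ x, Fin (n x) → ℝ),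
      (∀ x, (K x)ᵀ * K x = 1) ∧
        ∀ K' : VertexEnd n, (∀ x, (K' x)ᵀ * K' x = 1) →
          ∀ l', diagEnergy σ (rotate K U) l ≤ diagEnergy σ (rotate K' U) l' := by
  -- The energy is invariant under adding constants, so it only grows on a complement of `ℝ · 1`.
  obtain ⟨Z, hZ⟩ := Submodule.exists_isCompl (Submodule.span ℝ {(1 : ∀ x, Fin (n x) → ℝ)})
  have hcompact : IsCompact {K : VertexEnd n | ∀ x, (K x)ᵀ * K x = 1} := by
    simpa [Set.pi] using isCompact_univ_pi fun x : V => isCompact_orthogonal (ι := Fin (n x))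
  have hcont : Continuous fun p : VertexEnd n × Z =>
      diagEnergy σ (rotate p.1 U) p.2.1 :=
    continuous_diagEnergy_rotate U continuous_fst (continuous_subtype_val.comp continuous_snd)
  have hray : ∀ K : VertexEnd n, (∀ x, (K x)ᵀ * K x = 1) →
      ∀ z : Z, z ≠ 0 → ∃ r > (0 : ℝ), diagEnergy σ (rotate K U) (0 : Z).1 <
        diagEnergy σ (rotate K U) (r • z).1 := fun K hK z hz => by
    have hspan : z.1 ∉ Submodule.span ℝ {1} := fun hspan =>
      hz (Subtype.ext (Submodule.disjoint_def.1 hZ.disjoint _ hspan z.2))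
    have hlim := tendsto_diagEnergy_rotate_smul_atTop hU hK hspan
    exact ((Filter.eventually_gt_atTop 0).and (hlim.eventually_gt_atTop _)).exists
  obtain ⟨K, hK, z, hmin⟩ := exists_forall_le_of_ray_growth hcompact
    ⟨fun _ => 1, fun _ => by simp⟩ hcont
    (fun K _ => (convexOn_diagEnergy σ (rotate K U)).comp_linearMap Z.subtype) hray
  refine ⟨K, z, hK, fun K' hK' l' => ?_⟩
  obtain ⟨_, hc, z', hz', rfl⟩ :=
    Submodule.mem_sup.1 (hZ.sup_eq_top.symm ▸ Submodule.mem_top : l' ∈ _ ⊔ Z)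
  obtain ⟨c, rfl⟩ := Submodule.mem_span_singleton.1 hc
  rw [diagEnergy_add_const ((Subrep.weight_top σ).symm.trans hU.1)]
  exact hmin K' hK' ⟨z', hz'⟩

/-! ### The Kempf–Ness energy -/

/-- The Kempf–Ness energy of the base change `B`; its logarithmic term is that of the character of
weight `σ`. Squaring the determinant makes it invariant under orthogonal matrices. -/
noncomputable def energy (σ : V → ℝ) (U : Rep src tgt n)
    (B : VertexEnd n) : ℝ :=
  ∑ a, trace ((act src tgt n B U a)ᵀ * act src tgt n B U a) +
    ∑ x, σ x * Real.log ((B x).det ^ 2)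

lemma energy_mul (σ : V → ℝ) (U : Rep src tgt n) {C B : VertexEnd n}
    (hC : ∀ x, IsUnit (C x).det) (hB : ∀ x, IsUnit (B x).det) :
    energy σ U (fun x => C x * B x) =
      energy σ (act src tgt n B U) C + ∑ x, σ x * Real.log ((B x).det ^ 2) := by
  have hlog (x : V) : Real.log ((C x * B x).det ^ 2) =
      Real.log ((C x).det ^ 2) + Real.log ((B x).det ^ 2) := by
    rw [det_mul, mul_pow,
      Real.log_mul (pow_ne_zero 2 (hC x).ne_zero) (pow_ne_zero 2 (hB x).ne_zero)]
  simp only [energy, act_act, hlog, mul_add, Finset.sum_add_distrib, add_assoc]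

lemma energy_orthogonal_mul (σ : V → ℝ) (U : Rep src tgt n)
    {O : VertexEnd n} (hO : ∀ x, (O x)ᵀ * O x = 1) (B : VertexEnd n) :
    energy σ U (fun x => O x * B x) = energy σ U B := by
  simp only [energy, ← act_act, det_mul, mul_pow, det_sq_of_orthogonal (hO _), one_mul,
    add_left_inj]
  refine Finset.sum_congr rfl fun a _ => ?_
  generalize act src tgt n B U = N
  have hO' (x : V) : (O x)⁻¹ = (O x)ᵀ := inv_eq_left_inv (hO x)
  calc _ = trace (O (src a) * ((N a)ᵀ * ((O (tgt a))ᵀ * O (tgt a)) * N a * (O (src a))ᵀ)) := by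
        simp only [act, hO', transpose_mul, transpose_transpose, Matrix.mul_assoc]
    _ = _ := by
        rw [trace_mul_comm, hO, Matrix.mul_one, Matrix.mul_assoc, hO, Matrix.mul_one]

lemma energy_diagonal (σ : V → ℝ) (U : Rep src tgt n) (l : ∀ x, Fin (n x) → ℝ) :
    energy σ U (fun x => diagonal fun i => Real.exp (l x i / 2)) = diagEnergy σ U l := by
  have hinv (x : V) : (diagonal fun i => Real.exp (l x i / 2))⁻¹ =
      diagonal fun i => Real.exp (-l x i / 2) :=
    inv_eq_left_inv (by simp [← Real.exp_add, neg_div])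
  have hlog (x : V) : Real.log ((diagonal fun i => Real.exp (l x i / 2)).det ^ 2) = ∑ i, l x i := by
    rw [det_diagonal, ← Real.exp_sum, ← Real.exp_nat_mul, Real.log_exp, ← Finset.sum_div]
    norm_num [mul_div_cancel₀]
  simp only [energy, diagEnergy, hlog, act, hinv, add_left_inj]
  refine Finset.sum_congr rfl fun a _ => ?_
  rw [trace, Finset.sum_comm]
  refine Finset.sum_congr rfl fun j _ => ?_
  simp only [diag_apply, mul_apply (M := _ᵀ), transpose_apply, mul_diagonal, diagonal_mul]
  refine Finset.sum_congr rfl fun i _ => ?_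
  rw [sub_eq_add_neg, Real.exp_add, ← add_halves (l _ i), ← add_halves (-l _ j), Real.exp_add,
    Real.exp_add]
  ring_nf

lemma energy_diagonal_mul_transpose (σ : V → ℝ) (U : Rep src tgt n)
    {K : VertexEnd n} (hK : ∀ x, (K x)ᵀ * K x = 1) (l : ∀ x, Fin (n x) → ℝ) :
    energy σ U (fun x => (diagonal fun i => Real.exp (l x i / 2)) * (K x)ᵀ) =
      diagEnergy σ (rotate K U) l := by
  rw [energy_mul σ U (fun x => by simp [Finset.prod_ne_zero_iff])
    (fun x => isUnit_det_transpose_of_orthogonal (hK x)), energy_diagonal, rotate_eq_act hK]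
  simp [det_sq_of_orthogonal (hK _)]

lemma exists_forall_energy_le {U : Rep src tgt n} (hU : (⊤ : Subrep src tgt n U).IsStable σ) :
    ∃ B : VertexEnd n, (∀ x, IsUnit (B x).det) ∧
      ∀ B' : VertexEnd n, (∀ x, IsUnit (B' x).det) → energy σ U B ≤ energy σ U B' := by
  obtain ⟨K, l, hK, hmin⟩ := exists_forall_diagEnergy_rotate_le hU
  refine ⟨fun x => (diagonal fun i => Real.exp (l x i / 2)) * (K x)ᵀ, fun x => ?_,
    fun B' hB' => ?_⟩
  · exact isUnit_det_diagonal_exp_mul_transpose (hK x) (l x)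
  · choose O K' l' hO hK' hB' using fun x => exists_orthogonal_mul_diagonal_exp_mul (hB' x)
    rw [funext hB', energy_orthogonal_mul σ U hO, energy_diagonal_mul_transpose σ U hK',
      energy_diagonal_mul_transpose σ U hK]
    exact hmin K' hK' l'

/-! ### The first variation of the energy -/

lemma hasDerivAt_diagEnergy_smul (σ : V → ℝ) (U : Rep src tgt n) (c : ∀ x, Fin (n x) → ℝ) :
    HasDerivAt (fun s : ℝ => diagEnergy σ U (s • c))
      (∑ x, σ x * trace (diagonal (c x)) - momentPairing U fun x => diagonal (c x)) 0 := by
  have hpair : momentPairing U (fun x => diagonal (c x)) =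
      -∑ a, ∑ i, ∑ j, U a i j ^ 2 * (c (tgt a) i - c (src a) j) := by
    simp only [momentPairing, ← Finset.sum_neg_distrib, trace, diag_apply, diagonal_mul]
    refine Finset.sum_congr rfl fun a _ => ?_
    simp only [mul_apply, transpose_apply, Finset.mul_sum]
    rw [Finset.sum_comm, ← Finset.sum_sub_distrib]
    refine Finset.sum_congr rfl fun i _ => ?_
    rw [← Finset.sum_sub_distrib]
    exact Finset.sum_congr rfl fun j _ => by ring
  rw [hpair, sub_neg_eq_add, add_comm]
  simp only [trace_diagonal, diagEnergy, Pi.smul_apply, smul_eq_mul]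
  refine .add (.fun_sum fun a _ => .fun_sum fun i _ => .fun_sum fun j _ => ?_)
    (.fun_sum fun x _ => .const_mul _ (.fun_sum fun i _ => ?_))
  · have hlin : HasDerivAt (fun s : ℝ => s * c (tgt a) i - s * c (src a) j)
        (c (tgt a) i - c (src a) j) 0 := by
      simpa using
        ((hasDerivAt_id (0 : ℝ)).mul_const _).fun_sub ((hasDerivAt_id (0 : ℝ)).mul_const _)
    simpa using hlin.exp.const_mul (U a i j ^ 2)
  · simpa using (hasDerivAt_id (0 : ℝ)).mul_const (c x i)

lemma isCriticalAt_of_forall_diagEnergy_rotate_le [DecidableEq V] {U : Rep src tgt n}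
    (hmin : ∀ K : VertexEnd n, (∀ x, (K x)ᵀ * K x = 1) →
      ∀ l, diagEnergy σ (rotate K U) 0 ≤ diagEnergy σ (rotate K U) l) : IsCriticalAt U σ := by
  refine isCriticalAt_of_momentPairing_eq fun X hX => ?_
  have hherm (x : V) : (X x).IsHermitian := isHermitian_iff_isSymm.2 (hX x)
  choose K hK hdiag using fun x => exists_orthogonal_diagonal (hherm x)
  let c (x : V) : Fin (n x) → ℝ := (hherm x).eigenvalues
  have hlocal : IsLocalMin (fun s : ℝ => diagEnergy σ (rotate K U) (s • c)) 0 :=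
    .of_forall fun s => by simpa using hmin K hK (s • c)
  have hcrit := hlocal.hasDerivAt_eq_zero (hasDerivAt_diagEnergy_smul σ (rotate K U) c)
  have htrace (x : V) : trace (X x) = trace (diagonal (c x)) := by
    conv_lhs => rw [hdiag x, Matrix.mul_assoc, trace_mul_comm, Matrix.mul_assoc, hK x,
      Matrix.mul_one]
  rw [momentPairing_rotate U hK, ← funext hdiag] at hcrit
  simpa only [htrace] using (sub_eq_zero.1 hcrit).symm

theorem exists_isCriticalAt_act_of_isStable_top [DecidableEq V] {U : Rep src tgt n}
    (hU : (⊤ : Subrep src tgt n U).IsStable σ) :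
    ∃ B : VertexEnd n, (∀ x, IsUnit (B x).det) ∧ IsCriticalAt (act src tgt n B U) σ := by
  obtain ⟨B, hB, hmin⟩ := exists_forall_energy_le hU
  refine ⟨B, hB, isCriticalAt_of_forall_diagEnergy_rotate_le fun K hK l => ?_⟩
  have hshift (l : ∀ x, Fin (n x) → ℝ) :
      energy σ U (fun x => (diagonal fun i => Real.exp (l x i / 2)) * (K x)ᵀ * B x) =
        diagEnergy σ (rotate K (act src tgt n B U)) l + ∑ x, σ x * Real.log ((B x).det ^ 2) := by
    rw [energy_mul σ U (fun x => isUnit_det_diagonal_exp_mul_transpose (hK x) (l x)) hB,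
      energy_diagonal_mul_transpose σ _ hK]
  have hzero : energy σ U (fun x => (diagonal fun _ => Real.exp (0 / 2)) * (K x)ᵀ * B x) =
      energy σ U B := by
    simpa using energy_orthogonal_mul σ U (O := fun x => (K x)ᵀ)
      (fun x => by simpa using mul_eq_one_comm.1 (hK x)) B
  refine le_of_add_le_add_right ((hshift 0).symm.trans hzero |>.trans_le (hmin _ fun x => ?_)
    |>.trans_eq (hshift l))
  rw [det_mul]
  exact (isUnit_det_diagonal_exp_mul_transpose (hK x) (l x)).mul (hB x)

end StableToCritical

/-! ### Direct sums -/

section DirectSum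

variable {V A : Type} {src tgt : A → V} {n : V → ℕ} {ι : Type*} [DecidableEq ι] {k : ι → V → ℕ}

/-- The block diagonal family of endomorphisms with blocks `C j`, in the coordinates `e`. -/
def blockEnd (e : ∀ x, (Σ j, Fin (k j x)) ≃ Fin (n x)) (C : ∀ j, VertexEnd (k j)) : VertexEnd n :=
  fun x => (blockDiagonal' fun j => C j x).submatrix (e x).symm (e x).symm

/-- The direct sum of the representations `U j`, in the coordinates `e`. -/
def directSum (e : ∀ x, (Σ j, Fin (k j x)) ≃ Fin (n x)) (U : ∀ j, Rep src tgt (k j)) :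
    Rep src tgt n :=
  fun a => (blockDiagonal' fun j => U j a).submatrix (e (tgt a)).symm (e (src a)).symm

variable (e : ∀ x, (Σ j, Fin (k j x)) ≃ Fin (n x))
  {C : ∀ j, VertexEnd (k j)} (U : ∀ j, Rep src tgt (k j))

lemma momentPairing_directSum [Fintype ι] [Fintype A] (X : VertexEnd n) :
    momentPairing (directSum e U) X =
      ∑ j, momentPairing (U j) fun x => blockDiag' ((X x).submatrix (e x) (e x)) j := by
  simp only [momentPairing]
  rw [Finset.sum_comm]
  refine Finset.sum_congr rfl fun a _ => ?_
  simp only [directSum, transpose_submatrix, blockDiagonal'_transpose, submatrix_mul_equiv,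
    ← blockDiagonal'_mul, trace_mul_submatrix_blockDiagonal', Finset.sum_sub_distrib]

variable [Finite ι]

lemma blockEnd_mul_blockEnd_inv (hC : ∀ j x, IsUnit (C j x).det) (x : V) :
    blockEnd e C x * blockEnd e (fun j x => (C j x)⁻¹) x = 1 := by
  cases nonempty_fintype ι
  simp only [blockEnd, submatrix_mul_equiv, ← blockDiagonal'_mul, mul_nonsing_inv _ (hC _ x)]
  exact (congrArg (submatrix · _ _) blockDiagonal'_one).trans (submatrix_one_equiv _)

lemma isUnit_det_blockEnd (hC : ∀ j x, IsUnit (C j x).det) (x : V) :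
    IsUnit (blockEnd e C x).det :=
  isUnit_det_of_right_inverse (blockEnd_mul_blockEnd_inv e hC x)

lemma act_blockEnd_directSum (hC : ∀ j x, IsUnit (C j x).det) :
    act src tgt n (blockEnd e C) (directSum e U) =
      directSum e fun j => act src tgt (k j) (C j) (U j) := by
  cases nonempty_fintype ι
  funext a
  rw [act, inv_eq_right_inv (blockEnd_mul_blockEnd_inv e hC (src a))]
  simp only [blockEnd, directSum, act, submatrix_mul_equiv, ← blockDiagonal'_mul]

variable {U}

lemma isCriticalAt_directSum [Finite V] [DecidableEq V] [Fintype A] {σ : V → ℝ}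
    (hU : ∀ j, IsCriticalAt (U j) σ) : IsCriticalAt (directSum e U) σ := by
  cases nonempty_fintype V
  cases nonempty_fintype ι
  refine isCriticalAt_of_momentPairing_eq fun X _ => ?_
  rw [momentPairing_directSum, Finset.sum_congr rfl fun j _ => (hU j).momentPairing_eq _,
    Finset.sum_comm]
  refine Finset.sum_congr rfl fun x _ => ?_
  have htrace := trace_mul_submatrix_blockDiagonal' (e x) (X x) fun _ => 1
  have hone : blockDiagonal' (fun j => (1 : Matrix (Fin (k j x)) (Fin (k j x)) ℝ)) = 1 :=
    blockDiagonal'_one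
  rw [← Finset.mul_sum]
  simpa [hone] using congrArg (σ x * ·) htrace.symm

end DirectSum

section Decomposition

variable {V A : Type} {src tgt : A → V} {n : V → ℕ} {R : Rep src tgt n}

namespace Subrep

/-- A subrepresentation as a representation in its own right, in the bases `Module.finBasis`. -/
noncomputable def toRep (W : Subrep src tgt n R) :
    Rep src tgt fun x => Module.finrank ℝ (W.space x) :=
  fun a => LinearMap.toMatrix (Module.finBasis ℝ (W.space (src a)))
    (Module.finBasis ℝ (W.space (tgt a))) ((toLin' (R a)).restrict (W.invariant a))

lemma isHom_toRep (W : Subrep src tgt n R) : IsHom W.toRep R fun x =>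
    (W.space x).subtype ∘ₗ (Module.finBasis ℝ (W.space x)).equivFun.symm.toLinearMap := by
  intro a v
  obtain ⟨w, rfl⟩ := (Module.finBasis ℝ (W.space (src a))).equivFun.surjective v
  have hrepr : (W.toRep a).mulVec ((Module.finBasis ℝ (W.space (src a))).equivFun w) =
      (Module.finBasis ℝ (W.space (tgt a))).equivFun ((toLin' (R a)).restrict (W.invariant a) w) :=
    LinearMap.toMatrix_mulVec_repr _ _ _ w
  simp only [LinearMap.comp_apply, LinearEquiv.coe_coe]
  rw [hrepr, LinearEquiv.symm_apply_apply, LinearEquiv.symm_apply_apply]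
  rfl

lemma IsStable.toRep [Fintype V] {σ : V → ℝ} {W : Subrep src tgt n R} (hW : W.IsStable σ) :
    (⊤ : Subrep src tgt _ W.toRep).IsStable σ := by
  refine isStable_top_of_range_eq hW W.isHom_toRep (fun x => ?_) fun x => ?_
  · exact (W.space x).injective_subtype.comp (LinearEquiv.injective _)
  · rw [LinearEquiv.range_comp, Submodule.range_subtype]

end Subrep

variable {ι : Type*} [DecidableEq ι]

lemma exists_act_eq_directSum [Finite ι] {W : ι → Subrep src tgt n R}
    (hW : ∀ x, DirectSum.IsInternal fun j => (W j).space x) :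
    ∃ (e : ∀ x, (Σ j, Fin (Module.finrank ℝ ((W j).space x))) ≃ Fin (n x))
      (B : VertexEnd n), (∀ x, IsUnit (B x).det) ∧
        act src tgt n B R = directSum e fun j => (W j).toRep := by
  cases nonempty_fintype ι
  let b (x : V) := (hW x).collectedBasis fun j => Module.finBasis ℝ ((W j).space x)
  let e (x : V) := (b x).indexEquiv (Pi.basisFun ℝ (Fin (n x)))
  let b' (x : V) := (b x).reindex (e x)
  refine ⟨e, fun x => (b' x).toMatrix (Pi.basisFun ℝ _), fun x => ?_, funext fun a => ?_⟩
  · exact isUnit_det_of_right_inverse (Module.Basis.toMatrix_mul_toMatrix_flip _ _)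
  · have hinv : ((b' (src a)).toMatrix (Pi.basisFun ℝ _))⁻¹ =
        (Pi.basisFun ℝ _).toMatrix (b' (src a)) :=
      inv_eq_right_inv (Module.Basis.toMatrix_mul_toMatrix_flip _ _)
    have hmatrix : LinearMap.toMatrix (b' (src a)) (b' (tgt a)) (toLin' (R a)) =
        (LinearMap.toMatrix (b (src a)) (b (tgt a)) (toLin' (R a))).submatrix
          (e (tgt a)).symm (e (src a)).symm := by
      ext i j
      simp [b', LinearMap.toMatrix_apply]
    have hstd : LinearMap.toMatrix (Pi.basisFun ℝ _) (Pi.basisFun ℝ _) (toLin' (R a)) = R a :=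
      LinearMap.toMatrix'_toLin' (R a)
    calc _ = (b' (tgt a)).toMatrix (Pi.basisFun ℝ _) *
            LinearMap.toMatrix (Pi.basisFun ℝ _) (Pi.basisFun ℝ _) (toLin' (R a)) *
            (Pi.basisFun ℝ _).toMatrix (b' (src a)) := by rw [act, hinv, hstd]
      _ = (LinearMap.toMatrix (b (src a)) (b (tgt a)) (toLin' (R a))).submatrix
          (e (tgt a)).symm (e (src a)).symm := by
        rw [basis_toMatrix_mul_linearMap_toMatrix_mul_basis_toMatrix, hmatrix]
      _ = _ := congrArg (submatrix · _ _)
        (LinearMap.toMatrix_directSum_collectedBasis_eq_blockDiagonal' (hW (src a)) (hW (tgt a))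
          _ _ (f := toLin' (R a)) fun j v hv => (W j).invariant a v hv)

variable [Fintype V] {σ σ₀ : V → ℝ}

lemma sum_weight_of_isInternal [Fintype ι] {W : ι → Subrep src tgt n R}
    (hW : ∀ x, DirectSum.IsInternal fun j => (W j).space x) (σ : V → ℝ) :
    ∑ j, (W j).weight σ = ∑ x, σ x * n x := by
  simp only [Subrep.weight]
  rw [Finset.sum_comm]
  refine Finset.sum_congr rfl fun x _ => ?_
  have hrank := Module.finrank_eq_card_basis
    ((hW x).collectedBasis fun j => Module.finBasis ℝ ((W j).space x))
  rw [Module.finrank_fin_fun, Fintype.card_sigma] at hrank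
  simp [← Finset.mul_sum, hrank]

lemma isStable_of_mem_intrinsicInterior [Finite ι] {W : ι → Subrep src tgt n R}
    (hW : ∀ x, DirectSum.IsInternal fun j => (W j).space x)
    (hσ₀ : σ₀ ∈ OrbitCone src tgt n R) (hstable : ∀ j, (W j).IsStable σ₀)
    (hσ : σ ∈ intrinsicInterior ℝ (OrbitCone src tgt n R)) (j : ι) : (W j).IsStable σ := by
  cases nonempty_fintype ι
  obtain ⟨hsum, hle⟩ := mem_orbitCone_iff.1 (intrinsicInterior_subset hσ)
  obtain ⟨t, ht, hτ⟩ := exists_add_smul_sub_mem_of_mem_intrinsicInterior hσ hσ₀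
  refine ⟨?_, fun W' hlt hbot => ?_⟩
  · rw [← sum_weight_of_isInternal hW,
      Finset.sum_eq_zero_iff_of_nonpos fun j _ => hle (W j)] at hsum
    exact hsum j (Finset.mem_univ j)
  · have hτ' : W'.weight (σ + t • (σ - σ₀)) ≤ 0 := hτ.2 W'
    have hweight : W'.weight (σ + t • (σ - σ₀)) =
        W'.weight σ + t * (W'.weight σ - W'.weight σ₀) := by
      simp only [Subrep.weight, ← dimFunctional_apply, map_add, map_smul, map_sub, smul_eq_mul]
    by_contra! hnonneg
    linarith [mul_pos ht (sub_pos.2 (((hstable j).2 W' hlt hbot).trans_le hnonneg))]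

theorem exists_isCriticalAt_act_of_isInternal [Finite ι] [DecidableEq V] [Fintype A]
    {W : ι → Subrep src tgt n R}
    (hW : ∀ x, DirectSum.IsInternal fun j => (W j).space x) (hstable : ∀ j, (W j).IsStable σ) :
    ∃ B : VertexEnd n, (∀ x, IsUnit (B x).det) ∧ IsCriticalAt (act src tgt n B R) σ := by
  obtain ⟨e, B, hB, hact⟩ := exists_act_eq_directSum hW
  choose C hC hcrit using fun j => exists_isCriticalAt_act_of_isStable_top (hstable j).toRep
  refine ⟨fun x => blockEnd e C x * B x, fun x => ?_, ?_⟩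
  · rw [det_mul]
    exact (isUnit_det_blockEnd e hC x).mul (hB x)
  · rw [← act_act, hact, act_blockEnd_directSum e _ hC]
    exact isCriticalAt_directSum e hcrit

end Decomposition

theorem quiver_radial_isotropy_general {V A : Type} [Fintype V] [DecidableEq V] [Fintype A]
    (src tgt : A → V) (dv : V → ℕ) (R : Rep src tgt dv) (hlss : LocallySemisimple src tgt dv R)
    (σ : V → ℝ) :
    σ ∈ intrinsicInterior ℝ (OrbitCone src tgt dv R) ↔
      ∃ B : ∀ x : V, Matrix (Fin (dv x)) (Fin (dv x)) ℝ,
        (∀ x, IsUnit (B x).det) ∧ IsCriticalAt (act src tgt dv B R) σ := by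
  refine ⟨fun hσ => ?_, fun ⟨B, hB, hcrit⟩ => hcrit.mem_intrinsicInterior hB⟩
  obtain ⟨σ₀, k, W, hW, hsub⟩ := hlss
  have hstable (j : Fin k) : (W j).IsStable fun x => (σ₀ x : ℝ) :=
    Subrep.isStable_of_isStableSub (hsub j)
  obtain ⟨B₀, hB₀, hcrit₀⟩ := exists_isCriticalAt_act_of_isInternal hW hstable
  have hσ₀ := intrinsicInterior_subset (hcrit₀.mem_intrinsicInterior hB₀)
  exact exists_isCriticalAt_act_of_isInternal hW
    (isStable_of_mem_intrinsicInterior hW hσ₀ hstable hσ)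

/-- **Quiver Radial Isotropy.**  Let `Q` be a finite connected acyclic quiver, `R` a real
representation of dimension vector `dv` which is locally semi-simple, and `σ` an integral
weight.  Then `σ` lies in the relative (intrinsic) interior of the orbit cone `Ω(R)` if and
only if some `A ∈ ∏_x GL(dv x, ℝ)` puts `R` in `σ`-critical position. -/
theorem quiver_radial_isotropy {V A : Type} [Fintype V] [DecidableEq V] [Fintype A]
    (src tgt : A → V) (dv : V → ℕ)
    (hconn : Connected src tgt) (hacyc : Acyclic src tgt)
    (R : Rep src tgt dv) (hlss : LocallySemisimple src tgt dv R)
    (σ : V → ℤ) :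
    ((fun x => (σ x : ℝ)) ∈ intrinsicInterior ℝ (OrbitCone src tgt dv R)) ↔
      ∃ Amat : ∀ x : V, Matrix (Fin (dv x)) (Fin (dv x)) ℝ,
        (∀ x, IsUnit (Amat x).det) ∧
        IsCritical src tgt dv (act src tgt dv Amat R) σ :=
  quiver_radial_isotropy_general src tgt dv R hlss fun x => σ x

end QuiverRI
end

section
/- (RIF-degeneration of a semi-stable frame.) Let F = (X_1, …, X_n) with X_i ∈ ℝ^{d×d_i} be a matrix frame and c = (c_1,…,c_n) ∈ ℚ^n_{>0} with ∑_{i=1}^n c_i = d and c ∈ K_F. Then there exists a tuple F̃ = (X̃_1, …, X̃_n) with X̃_i ∈ ℝ^{d×d_i} such that: (a) (X̃_1,…,X̃_n) lies in the closure, in ∏_{i=1}^n ℝ^{d×d_i}, of the orbit {(λ_1·B·X_1, …, λ_n·B·X_n) : B ∈ GL(d,ℝ), λ_1,…,λ_n ∈ ℝ∖{0}}; (b) c ∈ K_{F̃} (so (F̃, c) is a semi-stable frame); and (c) (F̃, c) can be transformed into a radial isotropic frame, i.e. there exists A ∈ GL(d,ℝ) with each A·X̃_i nonzero and ∑_{i=1}^n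 c_i·(A·X̃_i)(A·X̃_i)ᵀ/‖A·X̃_i‖_F² = I_d. -/
open scoped BigOperators
open Matrix

namespace MFrames

/-- The squared Frobenius norm of a real matrix. -/
noncomputable def frobSq {α β : Type*} [Fintype α] [Fintype β] (X : Matrix α β ℝ) : ℝ :=
  ∑ i, ∑ j, X i j ^ 2

variable {d n : ℕ} {m : Fin n → ℕ}

/-- Squared distance between two tuples of matrices. -/
noncomputable def dist2 (F G : ∀ i : Fin n, Matrix (Fin d) (Fin (m i)) ℝ) : ℝ :=
  ∑ i, frobSq (F i - G i)

/-- The frame operator `∑ Xᵢ Xᵢᵀ`. -/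
noncomputable def frameOp (F : ∀ i : Fin n, Matrix (Fin d) (Fin (m i)) ℝ) :
    Matrix (Fin d) (Fin d) ℝ :=
  ∑ i, F i * (F i)ᵀ

/-- `F` is a matrix frame: `∑ Xᵢ Xᵢᵀ` is positive definite. -/
def IsMatrixFrame (F : ∀ i : Fin n, Matrix (Fin d) (Fin (m i)) ℝ) : Prop :=
  (frameOp F).PosDef

/-- `F` is an ε-nearly equal-norm Parseval matrix frame. -/
def NearlyENParseval (ε : ℝ) (F : ∀ i : Fin n, Matrix (Fin d) (Fin (m i)) ℝ) : Prop :=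
  (frameOp F - (1 - ε) • (1 : Matrix (Fin d) (Fin d) ℝ)).PosSemidef ∧
  ((1 + ε) • (1 : Matrix (Fin d) (Fin d) ℝ) - frameOp F).PosSemidef ∧
  ∀ i, (1 - ε) * ((d : ℝ) / n) ≤ frobSq (F i) ∧ frobSq (F i) ≤ (1 + ε) * ((d : ℝ) / n)

/-- `F` is an equal-norm Parseval matrix frame. -/
def EqualNormParseval (F : ∀ i : Fin n, Matrix (Fin d) (Fin (m i)) ℝ) : Prop :=
  frameOp F = 1 ∧ ∀ i, frobSq (F i) = (d : ℝ) / n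

/-- The columns of the concatenated matrix `[X₁ | … | Xₙ]`. -/
def col (F : ∀ i : Fin n, Matrix (Fin d) (Fin (m i)) ℝ) (p : (i : Fin n) × Fin (m i)) :
    Fin d → ℝ :=
  fun r => F p.1 r p.2

/-- `F` is generic: `n > d` and any `d` of the columns of `[X₁ | … | Xₙ]` are linearly
independent (hence a basis of `ℝ^d`). -/
def Generic (F : ∀ i : Fin n, Matrix (Fin d) (Fin (m i)) ℝ) : Prop :=
  d < n ∧ ∀ S : Finset ((i : Fin n) × Fin (m i)), S.card = d →
    LinearIndependent ℝ (fun p : S => col F (p : (i : Fin n) × Fin (m i)))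

/-- Column span of a matrix. -/
def colSpan {k : ℕ} (X : Matrix (Fin d) (Fin k) ℝ) : Submodule ℝ (Fin d → ℝ) :=
  Submodule.span ℝ (Set.range Xᵀ)

/-- The orbit polytope `K_F` of a tuple of matrices. -/
def orbitPolytope (F : ∀ i : Fin n, Matrix (Fin d) (Fin (m i)) ℝ) : Set (Fin n → ℝ) :=
  {c | (∀ i, 0 ≤ c i) ∧ (∑ i, c i = d) ∧
    ∀ I : Finset (Fin n),
      ∑ i ∈ I, c i ≤ (Module.finrank ℝ ↥(⨆ i ∈ I, colSpan (F i)) : ℝ)}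

/-- `Φ_F(t) = log det (∑ e^{tᵢ} Xᵢ Xᵢᵀ)`. -/
noncomputable def Phi (F : ∀ i : Fin n, Matrix (Fin d) (Fin (m i)) ℝ) (t : Fin n → ℝ) : ℝ :=
  Real.log (∑ i, Real.exp (t i) • (F i * (F i)ᵀ)).det

/-- The objective function `Φ_F(t) - ⟨t, c⟩` whose infimum over `t` is `f_F(c)`. -/
noncomputable def obj (F : ∀ i : Fin n, Matrix (Fin d) (Fin (m i)) ℝ)
    (c : Fin n → ℝ) (t : Fin n → ℝ) : ℝ :=
  Phi F t - ∑ i, t i * c i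

/-- `Δ_S` for `S ∈ 𝒜`, where `S` is encoded as a function `σ` assigning to each `i` a subset
`σ i ⊆ {1,…,dᵢ}` of the columns of `Xᵢ` (with `i ∈ S` iff `σ i ≠ ∅`). -/
noncomputable def Delta (F : ∀ i : Fin n, Matrix (Fin d) (Fin (m i)) ℝ)
    (σ : ∀ i : Fin n, Finset (Fin (m i))) : ℝ :=
  (∑ i, ∑ k ∈ σ i, Matrix.of (fun r s : Fin d => F i r k * F i s k)).det

/-- The index set `𝒜`: collections of subsets of columns with `d` columns in total. -/
def indexA (d : ℕ) (m : Fin n → ℕ) : Finset (∀ i : Fin n, Finset (Fin (m i))) :=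
  Finset.univ.filter fun σ => (∑ i, (σ i).card) = d

/-- Membership in the semialgebraic set `𝕍(F, c)`.  (Summing `(σ i).card • ⋯` over all of
`𝒜` is the same as summing `|Sᵢ| • ⋯` over those `S ∈ 𝒜` with `i ∈ S`.) -/
noncomputable def inVariety (F : ∀ i : Fin n, Matrix (Fin d) (Fin (m i)) ℝ)
    (c ξ : Fin n → ℝ) : Prop :=
  (∀ i, 0 < ξ i) ∧ ∀ i,
    (∑ σ ∈ indexA d m, ((σ i).card : ℝ) * (∏ l, ξ l ^ (σ l).card) * Delta F σ)
      = c i * ∑ σ ∈ indexA d m, (∏ l, ξ l ^ (σ l).card) * Delta F σ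

/-- `A` transforms `(F, c)` into a radial isotropic frame. -/
noncomputable def TransformsToRIF (F : ∀ i : Fin n, Matrix (Fin d) (Fin (m i)) ℝ)
    (c : Fin n → ℝ) (A : Matrix (Fin d) (Fin d) ℝ) : Prop :=
  ∑ i, (c i / frobSq (A * F i)) • ((A * F i) * (A * F i)ᵀ) = 1

/-- Columns of `X` all orthogonal to the subspace `T`, i.e. `Col(X) ⊆ T^⊥`. -/
def colsPerp {k : ℕ} (X : Matrix (Fin d) (Fin k) ℝ) (T : Submodule ℝ (Fin d → ℝ)) : Prop :=
  ∀ x ∈ T, Xᵀ.mulVec x = 0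

end MFrames

namespace MFrames

/-! The argument follows Kempf and Ness. For `B ∈ GL(d)` put
`Ψ_F(B) = ∑ cᵢ log ‖B Xᵢ‖² - log (det B)²`.

If `c ∈ K_F` then `Ψ_F` is bounded below: a greedy choice of columns, taking the `Xᵢ` in order of
increasing `‖B Xᵢ‖`, gives a basis of `ℝ^d` whose total weight is at most `∑ cᵢ log ‖B Xᵢ‖²`, and
the determinant of `B` applied to that basis is controlled by the norms of its columns.

Along a minimising sequence `Bₖ` the tuples `(Bₖ Xᵢ / ‖Bₖ Xᵢ‖)ᵢ` stay in a product of spheres, so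
they accumulate at some `F̃`. As `Ψ` is a cocycle, `B = 1` minimises `Ψ_F̃`, and the first order
condition at this minimum is radial isotropy of `F̃`. Compressing the isotropy identity to a
subspace and taking traces shows that `c ∈ K_F̃`. -/

section GreedyBasis

variable {ι κ K V R : Type*} [CommRing R] [LinearOrder R] [IsStrictOrderedRing R]
  [DivisionRing K] [AddCommGroup V] [Module K V]

lemma sum_mul_sub_eq_add_mul_sum {S : Type*} [CommRing S] (s : Finset ι) (c w : ι → S)
    (a L : S) : ∑ i ∈ s, c i * (L - w i) = ∑ i ∈ s, c i * (a - w i) + (L - a) * ∑ i ∈ s, c i := by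
  rw [Finset.mul_sum, ← Finset.sum_add_distrib]
  exact Finset.sum_congr rfl fun i _ => by ring

lemma finrank_span_le_card_of_image_subset {v : κ → V} {t : Set κ} {b : Finset κ}
    (h : v '' t ⊆ Submodule.span K (v '' b)) :
    Module.finrank K (Submodule.span K (v '' t)) ≤ b.card := by
  classical
  have hspan : Submodule.span K (v '' t) ≤ Submodule.span K (b.image v : Set V) := by
    rw [Finset.coe_image]
    exact Submodule.span_le.2 h
  have := Module.Finite.span_finset K (b.image v)
  calc Module.finrank K (Submodule.span K (v '' t))
      ≤ Module.finrank K (Submodule.span K (b.image v : Set V)) := Submodule.finrank_mono hspan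
    _ ≤ (b.image v).card := finrank_span_finset_le_card _
    _ ≤ b.card := Finset.card_image_le

/-- Asking for the inequality at all levels `L` at once is what makes the induction over the
weights go through. -/
lemma exists_greedy_basis [Finite κ] (v : κ → V) (g : κ → ι) (c w : ι → R)
    (hc : ∀ I : Finset ι,
      ∑ i ∈ I, c i ≤ (Module.finrank K (Submodule.span K (v '' (g ⁻¹' I))) : R))
    (s : Finset ι) :
    ∃ T : Finset κ, (T : Set κ) ⊆ g ⁻¹' s ∧ LinearIndepOn K v T ∧
      v '' (g ⁻¹' s) ⊆ Submodule.span K (v '' T) ∧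
      ∀ L, (∀ i ∈ s, w i ≤ L) → ∑ i ∈ s, c i * (L - w i) ≤ ∑ p ∈ T, (L - w (g p)) := by
  classical
  induction s using Finset.induction_on_max_value w with
  | empty => exact ⟨∅, by simp⟩
  | insert a s ha hmax ih =>
    obtain ⟨T, hTs, hTli, -, hT⟩ := ih
    obtain ⟨b, hbs, hTb, hspan, hbli⟩ := exists_linearIndepOn_extension hTli
      (hTs.trans (Set.preimage_mono (Finset.coe_subset.2 (Finset.subset_insert a s))))
    lift b to Finset κ using b.toFinite
    refine ⟨b, hbs, hbli, hspan, fun L hL => ?_⟩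
    have card_bound : ∑ i ∈ insert a s, c i ≤ (b.card : R) :=
      (hc _).trans (Nat.cast_le.2 (finrank_span_le_card_of_image_subset hspan))
    have level_bound :
        ∑ i ∈ insert a s, c i * (w a - w i) ≤ ∑ p ∈ b, (w a - w (g p)) := by
      rw [Finset.sum_insert ha, sub_self, mul_zero, zero_add]
      refine (hT _ hmax).trans (Finset.sum_le_sum_of_subset_of_nonneg hTb fun p hp _ => ?_)
      rcases Finset.mem_insert.1 (hbs hp) with hpa | hps
      · rw [hpa, sub_self]
      · exact sub_nonneg.2 (hmax _ hps)
    calc ∑ i ∈ insert a s, c i * (L - w i)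
        = ∑ i ∈ insert a s, c i * (w a - w i) + (L - w a) * ∑ i ∈ insert a s, c i :=
          sum_mul_sub_eq_add_mul_sum _ _ _ _ _
      _ ≤ ∑ p ∈ b, (w a - w (g p)) + (L - w a) * b.card := by
          have hLa : 0 ≤ L - w a := sub_nonneg.2 (hL a (Finset.mem_insert_self a s))
          gcongr
      _ = ∑ p ∈ b, (L - w (g p)) := by
          simpa using (sum_mul_sub_eq_add_mul_sum b 1 (w ∘ g) (w a) L).symm

lemma exists_linearIndependent_sum_le [Finite κ] [Fintype ι] [Module.Finite K V]
    (v : κ → V) (g : κ → ι) (c w : ι → R)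
    (hc : ∀ I : Finset ι,
      ∑ i ∈ I, c i ≤ (Module.finrank K (Submodule.span K (v '' (g ⁻¹' I))) : R))
    (hsum : ∑ i, c i = Module.finrank K V) :
    ∃ e : Fin (Module.finrank K V) → κ, LinearIndependent K (v ∘ e) ∧
      ∑ j, w (g (e j)) ≤ ∑ i, c i * w i := by
  classical
  obtain ⟨T, -, hTli, hspan, hT⟩ := exists_greedy_basis v g c w hc Finset.univ
  have card_le : T.card ≤ Module.finrank K V := by
    simpa using hTli.linearIndependent.fintype_card_le_finrank
  have le_card : Module.finrank K V ≤ T.card := by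
    have := (hc Finset.univ).trans (Nat.cast_le.2 (finrank_span_le_card_of_image_subset hspan))
    rwa [hsum, Nat.cast_le] at this
  have hcard : T.card = Module.finrank K V := card_le.antisymm le_card
  let E : Fin (Module.finrank K V) ≃ T := (T.equivFinOfCardEq hcard).symm
  refine ⟨fun j => E j, hTli.linearIndependent.comp E E.injective, ?_⟩
  obtain ⟨L, hL⟩ := (Set.finite_range w).bddAbove
  have hTL := hT L fun i _ => hL ⟨i, rfl⟩
  simp only [mul_sub, Finset.sum_sub_distrib, ← Finset.sum_mul, hsum, Finset.sum_const, hcard,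
    nsmul_eq_mul, sub_le_sub_iff_left] at hTL
  calc ∑ j, w (g (E j)) = ∑ p ∈ T, w (g p) := by
        rw [← Finset.sum_coe_sort T, ← Equiv.sum_comp E]
    _ ≤ ∑ i, c i * w i := hTL

end GreedyBasis

section Determinant

variable {ρ : Type*} [Fintype ρ] [DecidableEq ρ]

lemma abv_det_le_factorial_smul_prod {R S : Type*} [CommRing R] [Nontrivial R] [CommRing S]
    [LinearOrder S] [IsStrictOrderedRing S] {A : Matrix ρ ρ R} {abv : AbsoluteValue R S}
    {b : ρ → S} (hb : ∀ r j, abv (A r j) ≤ b j) :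
    abv A.det ≤ (Fintype.card ρ).factorial • ∏ j, b j :=
  calc abv A.det = abv (∑ σ : Equiv.Perm ρ, Equiv.Perm.sign σ • ∏ j, A (σ j) j) :=
        congrArg abv (det_apply A)
    _ ≤ ∑ σ : Equiv.Perm ρ, abv (Equiv.Perm.sign σ • ∏ j, A (σ j) j) := abv.sum_le _ _
    _ = ∑ σ : Equiv.Perm ρ, ∏ j, abv (A (σ j) j) :=
        Finset.sum_congr rfl fun σ _ => by rw [abv.map_units_int_smul, map_prod]
    _ ≤ ∑ _σ : Equiv.Perm ρ, ∏ j, b j := by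
        gcongr
        exact hb _ _
    _ = (Fintype.card ρ).factorial • ∏ j, b j := by simp [Fintype.card_perm]

lemma mul_ne_zero_of_isUnit_det {R κ : Type*} [CommRing R] {B : Matrix ρ ρ R}
    (hB : IsUnit B.det) {X : Matrix ρ κ R} (hX : X ≠ 0) : B * X ≠ 0 := by
  intro h
  apply hX
  rw [← nonsing_inv_mul_cancel_left B X hB, h, Matrix.mul_zero]

lemma hasDerivAt_zero_add_mul_add_eval_mul_sq {𝕜 : Type*} [NontriviallyNormedField 𝕜] (a b : 𝕜)
    (p : Polynomial 𝕜) : HasDerivAt (fun t => a + b * t + p.eval t * t ^ 2) b 0 := by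
  convert (Polynomial.C a + Polynomial.C b * Polynomial.X + p * Polynomial.X ^ 2).hasDerivAt 0
    using 1
  · simp
  · simp

lemma hasDerivAt_det_one_add_smul {𝕜 : Type*} [NontriviallyNormedField 𝕜] (E : Matrix ρ ρ 𝕜) :
    HasDerivAt (fun t : 𝕜 => (1 + t • E).det) E.trace 0 := by
  rw [funext fun t : 𝕜 => det_one_add_smul t E]
  exact hasDerivAt_zero_add_mul_add_eval_mul_sq 1 E.trace _

end Determinant

section FrobeniusNorm

variable {α β : Type*} [Fintype α] [Fintype β]

lemma sq_le_frobSq (X : Matrix α β ℝ) (a : α) (b : β) : X a b ^ 2 ≤ frobSq X :=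
  calc X a b ^ 2 ≤ ∑ j, X a j ^ 2 :=
        Finset.single_le_sum (fun j _ => sq_nonneg (X a j)) (Finset.mem_univ b)
    _ ≤ frobSq X :=
        Finset.single_le_sum (f := fun i => ∑ j, X i j ^ 2)
          (fun _ _ => Finset.sum_nonneg fun _ _ => sq_nonneg _) (Finset.mem_univ a)

lemma frobSq_nonneg (X : Matrix α β ℝ) : 0 ≤ frobSq X :=
  Finset.sum_nonneg fun _ _ => Finset.sum_nonneg fun _ _ => sq_nonneg _

lemma frobSq_zero : frobSq (0 : Matrix α β ℝ) = 0 := by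
  simp [frobSq]

lemma frobSq_pos {X : Matrix α β ℝ} (hX : X ≠ 0) : 0 < frobSq X := by
  contrapose! hX
  ext a b
  exact pow_eq_zero_iff two_ne_zero |>.1
    (((sq_le_frobSq X a b).trans hX).antisymm (sq_nonneg _))

lemma ne_zero_of_frobSq_eq_one {X : Matrix α β ℝ} (hX : frobSq X = 1) : X ≠ 0 := by
  rintro rfl
  exact zero_ne_one (frobSq_zero.symm.trans hX)

lemma frobSq_smul (t : ℝ) (X : Matrix α β ℝ) : frobSq (t • X) = t ^ 2 * frobSq X := by
  simp [frobSq, mul_pow, Finset.mul_sum]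

lemma frobSq_eq_trace (X : Matrix α β ℝ) : frobSq X = (X * Xᵀ).trace := by
  simp [frobSq, trace, mul_apply, sq]

lemma frobSq_add (X Y : Matrix α β ℝ) :
    frobSq (X + Y) = frobSq X + 2 * (Y * Xᵀ).trace + frobSq Y := by
  have hXY : (X * Yᵀ).trace = (Y * Xᵀ).trace := by
    rw [← trace_transpose, transpose_mul, transpose_transpose]
  simp only [frobSq_eq_trace, transpose_add, Matrix.add_mul, Matrix.mul_add, trace_add, hXY]
  ring

lemma hasDerivAt_frobSq_one_add_smul_mul [DecidableEq α] (E : Matrix α α ℝ) (X : Matrix α β ℝ) :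
    HasDerivAt (fun t : ℝ => frobSq ((1 + t • E) * X)) (2 * (E * (X * Xᵀ)).trace) 0 := by
  have expand : (fun t : ℝ => frobSq ((1 + t • E) * X)) = fun t =>
      frobSq X + 2 * (E * (X * Xᵀ)).trace * t
        + (Polynomial.C (frobSq (E * X))).eval t * t ^ 2 := by
    funext t
    simp only [Matrix.add_mul, Matrix.one_mul, Matrix.smul_mul, frobSq_add, frobSq_smul,
      trace_smul, Matrix.mul_assoc, smul_eq_mul, Polynomial.eval_C]
    ring
  rw [expand]
  exact hasDerivAt_zero_add_mul_add_eval_mul_sq _ _ _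

lemma continuous_frobSq : Continuous (frobSq : Matrix α β ℝ → ℝ) :=
  continuous_finsetSum _ fun i _ => continuous_finsetSum _ fun j _ =>
    (continuous_id.matrix_elem i j).pow 2

lemma isCompact_setOf_frobSq_eq (r : ℝ) : IsCompact {X : Matrix α β ℝ | frobSq X = r} := by
  have hbox : IsCompact (Set.univ.pi fun _ : α => Set.univ.pi fun _ : β => Set.Icc (-√r) √r) :=
    isCompact_univ_pi fun _ => isCompact_univ_pi fun _ => isCompact_Icc
  refine hbox.of_isClosed_subset (isClosed_eq continuous_frobSq continuous_const) ?_
  rintro X rfl a - b -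
  exact abs_le.1 (Real.abs_le_sqrt (sq_le_frobSq X a b))

end FrobeniusNorm

lemma exists_isHermitian_isProj {𝕜 ρ : Type*} [RCLike 𝕜] [Fintype ρ] [DecidableEq ρ]
    (W : Submodule 𝕜 (ρ → 𝕜)) :
    ∃ P : Matrix ρ ρ 𝕜, P.IsHermitian ∧ LinearMap.IsProj W P.toLin' := by
  let e := WithLp.linearEquiv 2 𝕜 (ρ → 𝕜)
  let U : Submodule 𝕜 (EuclideanSpace 𝕜 ρ) := W.comap e.toLinearMap
  let Φ := toEuclideanCLM (𝕜 := 𝕜) (n := ρ)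
  have hΦ : ∀ x, (Φ.symm U.starProjection).toLin' x = e (U.starProjection (e.symm x)) := fun x => by
    rw [← congrArg (fun f => f (e.symm x)) (Φ.apply_symm_apply U.starProjection)]
    rfl
  refine ⟨Φ.symm U.starProjection, (isSelfAdjoint_starProjection U).map Φ.symm,
    fun x => ?_, fun x hx => ?_⟩
  · rw [hΦ]
    exact U.starProjection_apply_mem _
  · rw [hΦ, Submodule.starProjection_eq_self_iff.2 hx, e.apply_symm_apply]

section Tuples

variable {ι ρ : Type*} {κ : ι → Type*} [Fintype ρ] [∀ i, Fintype (κ i)]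

/-- The tuple obtained by scaling every nonzero member to Frobenius norm one; zero matrices stay
zero. -/
noncomputable def normalize (F : ∀ i, Matrix ρ (κ i) ℝ) : ∀ i, Matrix ρ (κ i) ℝ :=
  fun i => (√(frobSq (F i)))⁻¹ • F i

lemma frobSq_mul_normalize (F : ∀ i, Matrix ρ (κ i) ℝ) (A : Matrix ρ ρ ℝ) (i : ι) :
    frobSq (A * normalize F i) = frobSq (A * F i) / frobSq (F i) := by
  rw [normalize, Matrix.mul_smul, frobSq_smul, inv_pow, Real.sq_sqrt (frobSq_nonneg _),
    inv_mul_eq_div]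

variable [DecidableEq ρ]

/-- The orbit of a tuple of matrices under `GL(d) × (ℝˣ)ⁿ`. -/
def orbit (F : ∀ i, Matrix ρ (κ i) ℝ) : Set (∀ i, Matrix ρ (κ i) ℝ) :=
  {G | ∃ B : Matrix ρ ρ ℝ, IsUnit B.det ∧
    ∃ lam : ι → ℝ, (∀ i, lam i ≠ 0) ∧ G = fun i => lam i • (B * F i)}

lemma normalize_mem_orbit {F : ∀ i, Matrix ρ (κ i) ℝ} (hF : ∀ i, F i ≠ 0) {B : Matrix ρ ρ ℝ}
    (hB : IsUnit B.det) : normalize (fun i => B * F i) ∈ orbit F :=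
  ⟨B, hB, _, fun i => inv_ne_zero (Real.sqrt_pos.2
    (frobSq_pos (mul_ne_zero_of_isUnit_det hB (hF i)))).ne', rfl⟩

/-- The square matrix whose `j`-th column is the column of index `(e j).2` of `F (e j).1`. -/
def selectCols (F : ∀ i, Matrix ρ (κ i) ℝ) (e : ρ → Σ i, κ i) : Matrix ρ ρ ℝ :=
  of fun r j => F (e j).1 r (e j).2

lemma det_selectCols_sq_le (F : ∀ i, Matrix ρ (κ i) ℝ) (e : ρ → Σ i, κ i) :
    (selectCols F e).det ^ 2 ≤ (Fintype.card ρ).factorial ^ 2 * ∏ j, frobSq (F (e j).1) := by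
  have habs : |(selectCols F e).det| ≤ (Fintype.card ρ).factorial • ∏ j, √(frobSq (F (e j).1)) :=
    abv_det_le_factorial_smul_prod (abv := AbsoluteValue.abs)
      fun r j => Real.abs_le_sqrt (sq_le_frobSq (F (e j).1) r (e j).2)
  calc (selectCols F e).det ^ 2
      ≤ ((Fintype.card ρ).factorial • ∏ j, √(frobSq (F (e j).1))) ^ 2 :=
        sq_le_sq' (abs_le.1 habs).1 (abs_le.1 habs).2
    _ = (Fintype.card ρ).factorial ^ 2 * ∏ j, frobSq (F (e j).1) := by
        simp only [nsmul_eq_mul, mul_pow, ← Finset.prod_pow, Real.sq_sqrt (frobSq_nonneg _)]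

lemma log_det_sq_add_log_det_selectCols_sq_le {F : ∀ i, Matrix ρ (κ i) ℝ} (hF : ∀ i, F i ≠ 0)
    {e : ρ → Σ i, κ i} (he : (selectCols F e).det ≠ 0) {B : Matrix ρ ρ ℝ} (hB : IsUnit B.det) :
    Real.log (B.det ^ 2) + Real.log ((selectCols F e).det ^ 2)
      ≤ Real.log ((Fintype.card ρ).factorial ^ 2)
        + ∑ j, Real.log (frobSq (B * F (e j).1)) := by
  have hpos : ∀ i, 0 < frobSq (B * F i) := fun i =>
    frobSq_pos (mul_ne_zero_of_isUnit_det hB (hF i))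
  have hdet : (B.det ^ 2) * (selectCols F e).det ^ 2
      ≤ (Fintype.card ρ).factorial ^ 2 * ∏ j, frobSq (B * F (e j).1) := by
    rw [← mul_pow, ← det_mul]
    exact det_selectCols_sq_le (fun i => B * F i) e
  have hB2 : B.det ^ 2 ≠ 0 := pow_ne_zero 2 hB.ne_zero
  rw [← Real.log_mul hB2 (pow_ne_zero 2 he), ← Real.log_prod fun j _ => (hpos _).ne',
    ← Real.log_mul (by positivity) (Finset.prod_ne_zero_iff.2 fun j _ => (hpos _).ne')]
  exact Real.log_le_log (by positivity) hdet

variable [Fintype ι]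

/-- The Kempf–Ness function `Ψ_F(B) = ∑ cᵢ log ‖B Xᵢ‖² - log (det B)²`, whose infimum over
`GL(d)` governs degenerations to radial isotropic position. It is only meaningful for invertible
`B` and nonzero `Xᵢ`. -/
noncomputable def kempfNess (F : ∀ i, Matrix ρ (κ i) ℝ) (c : ι → ℝ) (B : Matrix ρ ρ ℝ) : ℝ :=
  ∑ i, c i * Real.log (frobSq (B * F i)) - Real.log (B.det ^ 2)

lemma kempfNess_normalize_mul {F : ∀ i, Matrix ρ (κ i) ℝ} (hF : ∀ i, F i ≠ 0) (c : ι → ℝ)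
    {A B : Matrix ρ ρ ℝ} (hA : IsUnit A.det) (hB : IsUnit B.det) :
    kempfNess (normalize fun i => B * F i) c A
      = kempfNess F c (A * B) - kempfNess F c B := by
  have hBF : ∀ i, B * F i ≠ 0 := fun i => mul_ne_zero_of_isUnit_det hB (hF i)
  have log_frobSq : ∀ i, Real.log (frobSq (A * normalize (fun i => B * F i) i))
      = Real.log (frobSq (A * B * F i)) - Real.log (frobSq (B * F i)) := fun i => by
    rw [frobSq_mul_normalize, ← Matrix.mul_assoc, Real.log_div _ (frobSq_pos (hBF i)).ne']
    rw [Matrix.mul_assoc]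
    exact (frobSq_pos (mul_ne_zero_of_isUnit_det hA (hBF i))).ne'
  simp only [kempfNess, log_frobSq, det_mul, mul_pow, Real.log_mul (pow_ne_zero 2 hA.ne_zero)
    (pow_ne_zero 2 hB.ne_zero), mul_sub, Finset.sum_sub_distrib]
  ring

lemma continuousAt_kempfNess {Y : ∀ i, Matrix ρ (κ i) ℝ} (c : ι → ℝ) {A : Matrix ρ ρ ℝ}
    (hAY : ∀ i, A * Y i ≠ 0) : ContinuousAt (fun Z => kempfNess Z c A) Y := by
  have hcont : ∀ i, Continuous fun Z : ∀ i, Matrix ρ (κ i) ℝ => frobSq (A * Z i) := fun i =>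
    continuous_frobSq.comp (continuous_const.matrix_mul (continuous_apply i))
  exact (tendsto_finsetSum _ fun i _ =>
    ((hcont i).continuousAt.log (frobSq_pos (hAY i)).ne').const_mul (c i)).sub_const _

lemma exists_kempfNess_nonneg_of_bddBelow {F : ∀ i, Matrix ρ (κ i) ℝ} (hF : ∀ i, F i ≠ 0)
    {c : ι → ℝ} (hbdd : BddBelow (kempfNess F c '' {B | IsUnit B.det})) :
    ∃ Y ∈ closure (orbit F), (∀ i, frobSq (Y i) = 1) ∧
      ∀ A : Matrix ρ ρ ℝ, IsUnit A.det → 0 ≤ kempfNess Y c A := by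
  set S : Set ℝ := kempfNess F c '' {B | IsUnit B.det}
  have hS : S.Nonempty := ⟨_, 1, by simp, rfl⟩
  obtain ⟨u, -, hu, huS⟩ := exists_seq_tendsto_sInf hS hbdd
  choose B hB hBu using huS
  let Z : ℕ → ∀ i, Matrix ρ (κ i) ℝ := fun k => normalize fun i => B k * F i
  have hZ : ∀ k, Z k ∈ Set.univ.pi fun i => {X : Matrix ρ (κ i) ℝ | frobSq X = 1} :=
    fun k i _ => by
      have := frobSq_mul_normalize (fun i => B k * F i) 1 i
      rwa [Matrix.one_mul, Matrix.one_mul,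
        div_self (frobSq_pos (mul_ne_zero_of_isUnit_det (hB k) (hF i))).ne'] at this
  have (i : ι) : FirstCountableTopology (Matrix ρ (κ i) ℝ) :=
    inferInstanceAs (FirstCountableTopology (ρ → κ i → ℝ))
  obtain ⟨Y, hY, φ, hφ, hlim⟩ :=
    (isCompact_univ_pi fun i => isCompact_setOf_frobSq_eq (α := ρ) (β := κ i) 1).tendsto_subseq hZ
  have hY1 : ∀ i, frobSq (Y i) = 1 := fun i => hY i trivial
  refine ⟨Y, mem_closure_of_tendsto hlim (.of_forall fun k => normalize_mem_orbit hF (hB _)),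
    hY1, fun A hA => ?_⟩
  have hΨ : Filter.Tendsto (fun k => kempfNess (Z (φ k)) c A) .atTop (nhds (kempfNess Y c A)) :=
    (continuousAt_kempfNess c fun i => mul_ne_zero_of_isUnit_det hA
      (ne_zero_of_frobSq_eq_one (hY1 i))).tendsto.comp hlim
  have hgap : Filter.Tendsto (fun k => sInf S - u (φ k)) .atTop (nhds 0) := by
    simpa using (hu.comp hφ.tendsto_atTop).const_sub (sInf S)
  refine le_of_tendsto_of_tendsto' hgap hΨ fun k => ?_
  rw [kempfNess_normalize_mul hF c hA (hB _), hBu]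
  have hAB : IsUnit (A * B (φ k)).det := det_mul A _ ▸ hA.mul (hB _)
  exact sub_le_sub_right (csInf_le hbdd ⟨_, hAB, rfl⟩) _

lemma hasDerivAt_kempfNess_one_add_smul {Y : ∀ i, Matrix ρ (κ i) ℝ}
    (hY : ∀ i, frobSq (Y i) = 1) (c : ι → ℝ) (E : Matrix ρ ρ ℝ) :
    HasDerivAt (fun t : ℝ => kempfNess Y c (1 + t • E))
      (2 * ((E * ∑ i, c i • (Y i * (Y i)ᵀ)).trace - E.trace)) 0 := by
  have hnorm : ∀ i, HasDerivAt (fun t : ℝ => c i * Real.log (frobSq ((1 + t • E) * Y i)))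
      (c i * (2 * (E * (Y i * (Y i)ᵀ)).trace)) 0 := fun i => by
    simpa [hY i] using
      ((hasDerivAt_frobSq_one_add_smul_mul E (Y i)).log (by simp [hY i])).const_mul (c i)
  have hdet : HasDerivAt (fun t : ℝ => Real.log ((1 + t • E).det ^ 2)) (2 * E.trace) 0 := by
    simpa using! ((hasDerivAt_det_one_add_smul E).pow 2).log (by simp)
  refine ((HasDerivAt.fun_sum fun i _ => hnorm i).fun_sub hdet).congr_deriv ?_
  simp only [Finset.mul_sum, Matrix.mul_smul, trace_sum, trace_smul, smul_eq_mul, mul_sub,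
    mul_left_comm]

lemma sum_smul_mul_transpose_eq_one_of_kempfNess_nonneg {Y : ∀ i, Matrix ρ (κ i) ℝ}
    (hY : ∀ i, frobSq (Y i) = 1) {c : ι → ℝ}
    (hmin : ∀ A : Matrix ρ ρ ℝ, IsUnit A.det → 0 ≤ kempfNess Y c A) :
    ∑ i, c i • (Y i * (Y i)ᵀ) = 1 := by
  refine ext_iff_trace_mul_left.2 fun E => ?_
  have hdet : ∀ᶠ t : ℝ in nhds 0, (1 + t • E).det ≠ 0 :=
    (hasDerivAt_det_one_add_smul E).continuousAt.eventually_ne (by simp)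
  have hlocal : IsLocalMin (fun t : ℝ => kempfNess Y c (1 + t • E)) 0 := by
    filter_upwards [hdet] with t ht
    have hone : kempfNess Y c (1 + (0 : ℝ) • E) = 0 := by simp [kempfNess, hY]
    exact hone.trans_le (hmin _ ht.isUnit)
  have hzero := hlocal.hasDerivAt_eq_zero (hasDerivAt_kempfNess_one_add_smul hY c E)
  rw [Matrix.mul_one]
  linarith

lemma sum_le_finrank_of_isotropic {Y : ∀ i, Matrix ρ (κ i) ℝ} {c : ι → ℝ} (hc : ∀ i, 0 ≤ c i)
    (hY : ∀ i, frobSq (Y i) = 1) (hiso : ∑ i, c i • (Y i * (Y i)ᵀ) = 1) {I : Finset ι}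
    {W : Submodule ℝ (ρ → ℝ)} (hW : ∀ i ∈ I, ∀ k, (Y i).col k ∈ W) :
    ∑ i ∈ I, c i ≤ Module.finrank ℝ W := by
  obtain ⟨P, hPsymm, hP⟩ := exists_isHermitian_isProj W
  have hPt : Pᵀ = P := by rwa [IsHermitian, conjTranspose_eq_transpose_of_trivial] at hPsymm
  have hPP : P * P = P := toLin'.injective (by rw [toLin'_mul]; exact hP.isIdempotentElem)
  have hPY : ∀ i ∈ I, P * Y i = Y i := fun i hi =>
    ext_col fun k => hP.map_id _ (hW i hi k)
  calc ∑ i ∈ I, c i = ∑ i ∈ I, c i * frobSq (P * Y i) :=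
        Finset.sum_congr rfl fun i hi => by rw [hPY i hi, hY, mul_one]
    _ ≤ ∑ i, c i * frobSq (P * Y i) :=
        Finset.sum_le_univ_sum_of_nonneg fun i => mul_nonneg (hc i) (frobSq_nonneg _)
    _ = (P * (∑ i, c i • (Y i * (Y i)ᵀ)) * Pᵀ).trace := by
        simp only [frobSq_eq_trace, transpose_mul, Matrix.mul_sum, Matrix.sum_mul, Matrix.mul_smul,
          Matrix.smul_mul, trace_sum, trace_smul, smul_eq_mul, Matrix.mul_assoc]
    _ = P.trace := by rw [hiso, Matrix.mul_one, hPt, hPP]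
    _ = Module.finrank ℝ W := by rw [← trace_toLin'_eq, hP.trace]

end Tuples

section OrbitPolytope

variable {d n : ℕ} {m : Fin n → ℕ} {F : ∀ i : Fin n, Matrix (Fin d) (Fin (m i)) ℝ}
  {c : Fin n → ℝ}

lemma iSup_colSpan_eq_span_col (F : ∀ i : Fin n, Matrix (Fin d) (Fin (m i)) ℝ)
    (I : Finset (Fin n)) :
    ⨆ i ∈ I, colSpan (F i) = Submodule.span ℝ (col F '' (Sigma.fst ⁻¹' I)) := by
  refine le_antisymm (iSup₂_le fun i hi => Submodule.span_le.2 ?_) (Submodule.span_le.2 ?_)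
  · rintro _ ⟨k, rfl⟩
    exact Submodule.subset_span ⟨⟨i, k⟩, hi, rfl⟩
  · rintro _ ⟨⟨i, k⟩, hi, rfl⟩
    exact le_iSup₂ (f := fun i (_ : i ∈ I) => colSpan (F i)) i hi (Submodule.subset_span ⟨k, rfl⟩)

lemma ne_zero_of_mem_orbitPolytope (hc : c ∈ orbitPolytope F) {i : Fin n} (hi : 0 < c i) :
    F i ≠ 0 := by
  intro hFi
  have hspan : colSpan (F i) = ⊥ := by
    rw [colSpan, Submodule.span_eq_bot, hFi]
    rintro _ ⟨k, rfl⟩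
    rfl
  have hle := hc.2.2 {i}
  rw [Finset.sum_singleton, Finset.iSup_singleton, hspan, finrank_bot, Nat.cast_zero] at hle
  exact hle.not_gt hi

lemma exists_det_selectCols_ne_zero_sum_le (hc : c ∈ orbitPolytope F) (w : Fin n → ℝ) :
    ∃ e : Fin d → Σ i, Fin (m i), (selectCols F e).det ≠ 0 ∧
      ∑ j, w (e j).1 ≤ ∑ i, c i * w i := by
  obtain ⟨-, hsum, hrank⟩ := hc
  obtain ⟨e, he, hle⟩ := exists_linearIndependent_sum_le (col F) Sigma.fst c w
    (fun I => iSup_colSpan_eq_span_col F I ▸ hrank I) (by simpa using hsum)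
  let E : Fin d ≃ Fin (Module.finrank ℝ (Fin d → ℝ)) := finCongr (by simp)
  refine ⟨e ∘ E, ?_, (E.sum_comp fun j => w (e j).1).trans_le hle⟩
  have hli : LinearIndependent ℝ (selectCols F (e ∘ E)).col := he.comp E E.injective
  exact ((isUnit_iff_isUnit_det _).1 (linearIndependent_cols_iff_isUnit.1 hli)).ne_zero

lemma bddBelow_kempfNess_of_mem_orbitPolytope (hF : ∀ i, F i ≠ 0) (hc : c ∈ orbitPolytope F) :
    BddBelow (kempfNess F c '' {B | IsUnit B.det}) := by
  obtain ⟨C, hC⟩ := (Set.finite_range fun e : Fin d → Σ i, Fin (m i) =>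
    Real.log ((selectCols F e).det ^ 2)).bddBelow
  refine ⟨C - Real.log ((Fintype.card (Fin d)).factorial ^ 2), ?_⟩
  rintro _ ⟨B, hB, rfl⟩
  obtain ⟨e, he, hle⟩ :=
    exists_det_selectCols_ne_zero_sum_le hc fun i => Real.log (frobSq (B * F i))
  have hCe : C ≤ Real.log ((selectCols F e).det ^ 2) := hC ⟨e, rfl⟩
  have hdet := log_det_sq_add_log_det_selectCols_sq_le hF he hB
  rw [kempfNess]
  linarith

lemma mem_orbitPolytope_of_isotropic {Y : ∀ i : Fin n, Matrix (Fin d) (Fin (m i)) ℝ}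
    (hc : ∀ i, 0 ≤ c i) (hY : ∀ i, frobSq (Y i) = 1)
    (hiso : ∑ i, c i • (Y i * (Y i)ᵀ) = 1) : c ∈ orbitPolytope Y := by
  refine ⟨hc, ?_, fun I => sum_le_finrank_of_isotropic hc hY hiso fun i hi k => ?_⟩
  · simpa [trace_sum, ← frobSq_eq_trace, hY] using congrArg trace hiso
  · exact le_iSup₂ (f := fun i (_ : i ∈ I) => colSpan (Y i)) i hi (Submodule.subset_span ⟨k, rfl⟩)

end OrbitPolytope

theorem RIF_degeneration_general {d n : ℕ} {m : Fin n → ℕ}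
    (F : ∀ i : Fin n, Matrix (Fin d) (Fin (m i)) ℝ) (hF : ∀ i, F i ≠ 0) (c : Fin n → ℝ)
    (hc : c ∈ orbitPolytope F) :
    ∃ Ft ∈ closure (orbit F), c ∈ orbitPolytope Ft ∧
      ∃ A : Matrix (Fin d) (Fin d) ℝ, IsUnit A.det ∧ (∀ i, A * Ft i ≠ 0) ∧
        TransformsToRIF Ft c A := by
  obtain ⟨Y, hYF, hY, hmin⟩ :=
    exists_kempfNess_nonneg_of_bddBelow hF (bddBelow_kempfNess_of_mem_orbitPolytope hF hc)
  have hiso := sum_smul_mul_transpose_eq_one_of_kempfNess_nonneg hY hmin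
  refine ⟨Y, hYF, mem_orbitPolytope_of_isotropic hc.1 hY hiso, 1, by simp, fun i => ?_, ?_⟩
  · rw [Matrix.one_mul]
    exact ne_zero_of_frobSq_eq_one (hY i)
  · simpa only [TransformsToRIF, Matrix.one_mul, hY, div_one] using hiso

/-- **Theorem 1(2) (RIF-degeneration of a semi-stable frame).**  A semi-stable matrix frame
`(F, c)` degenerates (in the sense of quiver representations, i.e. within the closure of
its `GL(d) × (ℝˣ)ⁿ`-orbit) to a semi-stable frame `(F̃, c)` which can be transformed into
a radial isotropic frame. -/
theorem RIF_degeneration {d n : ℕ} {m : Fin n → ℕ}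
    (F : ∀ i : Fin n, Matrix (Fin d) (Fin (m i)) ℝ) (hF : IsMatrixFrame F)
    (c : Fin n → ℚ) (hc : ∀ i, 0 < c i) (hsum : ∑ i, (c i : ℝ) = d)
    (hss : (fun i => (c i : ℝ)) ∈ orbitPolytope F) :
    ∃ Ft : ∀ i : Fin n, Matrix (Fin d) (Fin (m i)) ℝ,
      Ft ∈ closure {G : ∀ i : Fin n, Matrix (Fin d) (Fin (m i)) ℝ |
          ∃ B : Matrix (Fin d) (Fin d) ℝ, IsUnit B.det ∧
            ∃ lam : Fin n → ℝ, (∀ i, lam i ≠ 0) ∧ G = fun i => lam i • (B * F i)} ∧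
      (fun i => (c i : ℝ)) ∈ orbitPolytope Ft ∧
      ∃ A : Matrix (Fin d) (Fin d) ℝ, IsUnit A.det ∧ (∀ i, A * Ft i ≠ 0) ∧
        TransformsToRIF Ft (fun i => (c i : ℝ)) A :=
  RIF_degeneration_general F
    (fun i => ne_zero_of_mem_orbitPolytope hss (Rat.cast_pos.2 (hc i))) _ hss

end MFrames
end
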